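/- arXiv:2405.05577 — 2 statements merged into one kernel-verified Lean document; each statement's English description precedes it below -/
import Mathlib

section
/- Let n ≥ 2, 0 < α < 1 and 1/2 < s < 1. Suppose u ∈ 𝓛_{2s,α}(ℝⁿ×ℝ) is a distributional solution of ∂_t^α u + (-Δ)^s u = 0 in ℝⁿ×ℝ, i.e. ∫_ℝ ∫_{ℝⁿ} u(x,t)·[D_right^α φ(x,t) + (-Δ)^s φ(x,t)] dx dt = 0 for every real-valued Schwartz function φ on ℝⁿ×ℝ. Assume in addition that there exists γ with 0 ≤ γ ≤ 1 such that for every t ∈ ℝ, liminf_{|x|→∞} u(x,t)/|x|^γ ≥ 0 (that is, for every t and every ε > 0 there exists R > 0 such that u(x,t) ≥ −ε|x|^γ whenever |x| ≥ R). Then u is equal almost everywhere to a constant. -/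
open MeasureTheory Set

/-- The normalization constant `C_α = 1/|Γ(-α)|` for the Marchaud fractional derivative. -/
noncomputable def Calpha (α : ℝ) : ℝ := 1 / |Real.Gamma (-α)|

/-- The normalization constant `C_{n,s} = 4^s Γ(n/2+s)/(π^{n/2}|Γ(-s)|)` for the
fractional Laplacian. -/
noncomputable def Cns (n : ℕ) (s : ℝ) : ℝ :=
  (4 : ℝ) ^ s * Real.Gamma ((n : ℝ) / 2 + s) / (Real.pi ^ ((n : ℝ) / 2) * |Real.Gamma (-s)|)

/-- The right Marchaud fractional derivative of order `α` in the time variable: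
`D_right^α φ(x,t) = C_α ∫_t^∞ (φ(x,t) - φ(x,τ))/(τ-t)^{1+α} dτ`. -/
noncomputable def marchaudRight {n : ℕ} (α : ℝ) (φ : EuclideanSpace ℝ (Fin n) × ℝ → ℝ)
    (x : EuclideanSpace ℝ (Fin n)) (t : ℝ) : ℝ :=
  Calpha α * ∫ τ in Ioi t, (φ (x, t) - φ (x, τ)) / (τ - t) ^ (1 + α)

/-- The fractional Laplacian `(-Δ)^s` acting in the space variable:
`(-Δ)^s φ(x,t) = (C_{n,s}/2) ∫_{ℝⁿ} (2φ(x,t) - φ(x+y,t) - φ(x-y,t))/|y|^{n+2s} dy`. -/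
noncomputable def fracLap {n : ℕ} (s : ℝ) (φ : EuclideanSpace ℝ (Fin n) × ℝ → ℝ)
    (x : EuclideanSpace ℝ (Fin n)) (t : ℝ) : ℝ :=
  Cns n s / 2 * ∫ y : EuclideanSpace ℝ (Fin n),
    (2 * φ (x, t) - φ (x + y, t) - φ (x - y, t)) / ‖y‖ ^ ((n : ℝ) + 2 * s)

/-!
The operators `-(-Δ)^s` and `-D_right^α` are both averages of finite differences against a stable
Lévy measure, and away from the origin their symbols are smooth with negative real part. Hence the
sum of the two symbols can be inverted on tensor products `g ⊗ h` whose factors are supported off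
the origin: the inverse Fourier transform of every such product arises by applying the operator to a
test function, so that `u` annihilates it. Consequently, for fixed `g`, the pairing of `u(·,t)` with
the inverse Fourier transform of `g` is a function of `t` with spectrum at the origin; its growth is
too slow for a nonconstant polynomial, so it is a constant `c`. Testing with `𝓕⁻ F` for
`F = g / symbol` and any `ρ` in time, the fractional derivative of `ρ` has mean zero, which leaves
`c ∫ ρ = 0`, that is `c = 0`. Thus almost every slice `u(·,t)` has its spectrum at the origin.

A function with spectrum at the origin coincides with its averages over dilated Schwartz kernels,
and weighted integrability makes differences of high enough order of these averages decay. For the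
slices, second differences vanish, so that they are affine, and the lower bound `-ε ‖x‖` makes them
constant; for the resulting function of `t` already the first differences vanish.
-/

open Real Filter
open scoped Topology ContDiff FourierTransform SchwartzMap fwdDiff

/-! ### Forward differences -/

section ForwardDifference

variable {V W F : Type*} [NormedAddCommGroup F]

lemma fwdDiff_iter_map_add [AddCommMonoid V] [AddCommMonoid W] (A : V →+ W) (f : W → F) (m : ℕ)
    (h x : V) (b : W) : Δ_[A h] ^[m] f (A x + b) = Δ_[h] ^[m] (fun y => f (A y + b)) x := by
  simp only [fwdDiff_iter_eq_sum_shift, map_add, map_nsmul, add_right_comm]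

lemma continuous_fwdDiff_iter [AddCommMonoid V] [TopologicalSpace V] [ContinuousAdd V]
    {f : V → F} (hf : Continuous f) (m : ℕ) : Continuous fun p : V × V => Δ_[p.1] ^[m] f p.2 := by
  simp only [fwdDiff_iter_eq_sum_shift]
  fun_prop

lemma norm_fwdDiff_iter_le [AddCommMonoid V] {f : V → F} {B : ℝ} (hf : ∀ x, ‖f x‖ ≤ B) (m : ℕ)
    (h x : V) : ‖Δ_[h] ^[m] f x‖ ≤ 2 ^ m * B := by
  induction m generalizing f B with
  | zero => simpa using hf x
  | succ m ih =>
    rw [Function.iterate_succ_apply, pow_succ, mul_assoc]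
    refine ih fun y => (norm_sub_le _ _).trans ?_
    linarith [hf (y + h), hf y]

variable [NormedSpace ℝ F]

lemma norm_fwdDiff_one_iter_le {f : ℝ → F} {m : ℕ} (hf : ContDiff ℝ m f) {a B : ℝ}
    (hB : ∀ s ∈ Icc a (a + m), ‖iteratedDeriv m f s‖ ≤ B) : ‖Δ_[1] ^[m] f a‖ ≤ B := by
  induction m generalizing f B with
  | zero => simpa using hB a
  | succ m ih =>
    have hf' : ContDiff ℝ m f := hf.of_le (by norm_cast; omega)
    have hshift : ContDiff ℝ m fun s => f (s + 1) := hf'.comp (by fun_prop)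
    refine ih (hshift.sub hf') fun s hs => ?_
    change ‖iteratedDeriv m ((fun s => f (s + 1)) - f) s‖ ≤ B
    rw [iteratedDeriv_sub hshift.contDiffAt hf'.contDiffAt, iteratedDeriv_comp_add_const]
    have hdiff := hf.differentiable_iteratedDeriv m (by norm_cast; omega)
    have hmean := (convex_Icc s (s + 1)).norm_image_sub_le_of_norm_deriv_le (x := s) (y := s + 1)
      (fun r _ => hdiff r)
      (fun r hr => by
        rw [← iteratedDeriv_succ]
        refine hB r ⟨hs.1.trans hr.1, ?_⟩
        push_cast
        linarith [hs.2, hr.2])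
      (by simp) (by simp)
    simpa using hmean

variable [NormedAddCommGroup V] [NormedSpace ℝ V]

lemma norm_fwdDiff_iter_le_of_norm_iteratedFDeriv_le {f : V → F} {m : ℕ} (hf : ContDiff ℝ m f)
    {x h : V} {B : ℝ} (hB : ∀ s ∈ Icc (0 : ℝ) m, ‖iteratedFDeriv ℝ m f (x + s • h)‖ ≤ B) :
    ‖Δ_[h] ^[m] f x‖ ≤ B * ‖h‖ ^ m := by
  set L : ℝ →L[ℝ] V := ContinuousLinearMap.toSpanSingleton ℝ h with hL
  have hfx : ContDiff ℝ m fun y => f (x + y) := hf.comp (by fun_prop)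
  have hline : Δ_[h] ^[m] f x = Δ_[1] ^[m] ((fun y => f (x + y)) ∘ L) 0 := by
    simp [fwdDiff_iter_eq_sum_shift, hL, ContinuousLinearMap.toSpanSingleton_apply,
      Nat.cast_smul_eq_nsmul]
  rw [hline]
  refine norm_fwdDiff_one_iter_le (hfx.comp L.contDiff) fun s hs => ?_
  rw [← norm_iteratedFDeriv_eq_norm_iteratedDeriv, L.iteratedFDeriv_comp_right hfx _ le_rfl,
    iteratedFDeriv_comp_add_left]
  refine (ContinuousMultilinearMap.norm_compContinuousLinearMap_le _ _).trans ?_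
  have hnorm : ‖L‖ = ‖h‖ := by simp [hL]
  simp only [Finset.prod_const, Finset.card_univ, Fintype.card_fin, hnorm]
  refine mul_le_mul_of_nonneg_right ?_ (by positivity)
  simpa [hL, ContinuousLinearMap.toSpanSingleton_apply] using hB s (by simpa using hs)

end ForwardDifference

section IntegralForwardDifference

variable {V F : Type*} [AddCommGroup V] [MeasurableSpace V] [MeasurableAdd V]
  [NormedAddCommGroup F] {μ : Measure V} [μ.IsAddRightInvariant] {f : V → F}

lemma integrable_fwdDiff_iter (hf : Integrable f μ) (m : ℕ) (h : V) :
    Integrable (Δ_[h] ^[m] f) μ := by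
  induction m generalizing f with
  | zero => exact hf
  | succ _ ih => exact ih ((hf.comp_add_right h).sub hf)

lemma integral_norm_fwdDiff_iter_le (hf : Integrable f μ) (m : ℕ) (h : V) :
    ∫ x, ‖Δ_[h] ^[m] f x‖ ∂μ ≤ 2 ^ m * ∫ x, ‖f x‖ ∂μ := by
  induction m generalizing f with
  | zero => simp
  | succ m ih =>
    have hshift := hf.comp_add_right h
    rw [Function.iterate_succ_apply, pow_succ, mul_assoc]
    refine (ih (hshift.sub hf)).trans (mul_le_mul_of_nonneg_left ?_ (by positivity))
    calc ∫ x, ‖f (x + h) - f x‖ ∂μ ≤ ∫ x, (‖f (x + h)‖ + ‖f x‖) ∂μ :=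
          integral_mono (hshift.sub hf).norm (hshift.norm.add hf.norm) fun x => norm_sub_le _ _
      _ = 2 * ∫ x, ‖f x‖ ∂μ := by
          rw [integral_add hshift.norm hf.norm, integral_add_right_eq_self (‖f ·‖) h, two_mul]

lemma integral_fwdDiff_iter_eq_zero [NormedSpace ℝ F] (hf : Integrable f μ) {m : ℕ} (hm : m ≠ 0)
    (h : V) : ∫ x, Δ_[h] ^[m] f x ∂μ = 0 := by
  obtain ⟨m, rfl⟩ := Nat.exists_eq_succ_of_ne_zero hm
  have hint := integrable_fwdDiff_iter hf m h
  simp only [Function.iterate_succ_apply', fwdDiff]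
  rw [integral_sub (hint.comp_add_right h) hint, integral_add_right_eq_self, sub_self]

end IntegralForwardDifference

section SchwartzDecay

variable {V F : Type*} [NormedAddCommGroup V] [NormedAddCommGroup F]

lemma continuous_one_add_norm_rpow (N : ℝ) : Continuous fun x : V => (1 + ‖x‖) ^ N :=
  (by fun_prop : Continuous fun x : V => 1 + ‖x‖).rpow_const fun x => .inl (by positivity)

lemma one_add_rpow_neg_le {a p : ℝ} (ha : 0 ≤ a) (hp : 0 ≤ p) :
    (1 + a) ^ (-p) ≤ 2 / (1 + a ^ p) := by
  rw [Real.rpow_neg (by positivity), le_div_iff₀ (by positivity), inv_mul_le_iff₀ (by positivity)]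
  have hmono : a ^ p ≤ (1 + a) ^ p := Real.rpow_le_rpow ha (by linarith) hp
  have hone : 1 ≤ (1 + a) ^ p := Real.one_le_rpow (by linarith) hp
  linarith

lemma one_add_norm_add_rpow_neg_le {N : ℝ} (hN : 0 ≤ N) (x y : V) :
    (1 + ‖x + y‖) ^ (-N) ≤ (1 + ‖y‖) ^ N * (1 + ‖x‖) ^ (-N) := by
  rw [Real.rpow_neg (by positivity), Real.rpow_neg (by positivity), ← div_eq_mul_inv,
    inv_le_iff_one_le_mul₀ (by positivity), div_mul_eq_mul_div, le_div_iff₀ (by positivity),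
    one_mul, ← Real.mul_rpow (by positivity) (by positivity)]
  refine Real.rpow_le_rpow (by positivity) ?_ hN
  have htriangle : ‖x‖ ≤ ‖x + y‖ + ‖y‖ := by simpa using norm_sub_le (x + y) y
  nlinarith [mul_nonneg (norm_nonneg y) (norm_nonneg (x + y))]

variable [NormedSpace ℝ V] [NormedSpace ℝ F] (f : 𝓢(V, F))

lemma exists_norm_iteratedFDeriv_schwartz_le (m : ℕ) (N : ℝ) :
    ∃ C, 0 ≤ C ∧ ∀ x, ‖iteratedFDeriv ℝ m f x‖ ≤ C * (1 + ‖x‖) ^ (-N) := by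
  obtain ⟨k, hk⟩ := exists_nat_ge N
  refine ⟨2 ^ k * ((Finset.Iic (k, m)).sup fun p => SchwartzMap.seminorm ℝ p.1 p.2) f,
    by positivity, fun x => ?_⟩
  have hseminorm :=
    SchwartzMap.one_add_le_sup_seminorm_apply (𝕜 := ℝ) (m := (k, m)) le_rfl le_rfl f x
  have hpow : (1 + ‖x‖) ^ N ≤ (1 + ‖x‖) ^ k := by
    rw [← Real.rpow_natCast]
    exact Real.rpow_le_rpow_of_exponent_le (by linarith [norm_nonneg x]) hk
  rw [Real.rpow_neg (by positivity), ← div_eq_mul_inv, le_div_iff₀ (by positivity), mul_comm]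
  exact (mul_le_mul_of_nonneg_right hpow (norm_nonneg _)).trans hseminorm

lemma exists_norm_schwartz_le (N : ℝ) : ∃ C, 0 ≤ C ∧ ∀ x, ‖f x‖ ≤ C * (1 + ‖x‖) ^ (-N) := by
  simpa using exists_norm_iteratedFDeriv_schwartz_le f 0 N

lemma exists_norm_schwartz_sub_le {N : ℝ} (hN : 0 ≤ N) :
    ∃ C, 0 ≤ C ∧ ∀ x y, ‖f (x - y)‖ ≤ C * (1 + ‖y‖) ^ N * (1 + ‖x‖) ^ (-N) := by
  obtain ⟨C, hC, hf⟩ := exists_norm_schwartz_le f N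
  refine ⟨C, hC, fun x y => (hf _).trans ?_⟩
  rw [sub_eq_add_neg, mul_assoc]
  simpa using mul_le_mul_of_nonneg_left (one_add_norm_add_rpow_neg_le hN x (-y)) hC

lemma exists_norm_mul_schwartz_sub_smul_le {V : Type*} [NormedAddCommGroup V]
    [NormedSpace ℝ V] {N : ℝ} (hN : 0 ≤ N) (f g : 𝓢(V, ℂ)) :
    ∃ C, ∀ l ∈ Icc (0 : ℝ) 1, ∀ x w,
      ‖f w * g (x - l • w)‖ ≤ C * (1 + ‖x‖) ^ (-N) * ((1 + ‖w‖) ^ N * ‖f w‖) := by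
  obtain ⟨C, hC, hg⟩ := exists_norm_schwartz_sub_le g hN
  refine ⟨C, fun l hl x w => ?_⟩
  have hlw : 1 + ‖l • w‖ ≤ 1 + ‖w‖ := by
    rw [norm_smul, Real.norm_of_nonneg hl.1]
    linarith [mul_le_of_le_one_left (norm_nonneg w) hl.2]
  calc ‖f w * g (x - l • w)‖ ≤ ‖f w‖ * (C * (1 + ‖w‖) ^ N * (1 + ‖x‖) ^ (-N)) := by
        rw [norm_mul]
        refine mul_le_mul_of_nonneg_left ((hg x (l • w)).trans ?_) (norm_nonneg _)
        gcongr
    _ = C * (1 + ‖x‖) ^ (-N) * ((1 + ‖w‖) ^ N * ‖f w‖) := by ring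

lemma exists_norm_fwdDiff_iter_schwartz_le (m : ℕ) {N : ℝ} (hN : 0 ≤ N) :
    ∃ C, 0 ≤ C ∧ ∀ h x,
      ‖Δ_[h] ^[m] f x‖ ≤ C * ‖h‖ ^ m * (1 + ‖h‖) ^ N * (1 + ‖x‖) ^ (-N) := by
  obtain ⟨C, hC, hf⟩ := exists_norm_iteratedFDeriv_schwartz_le f m N
  refine ⟨C * (1 + m) ^ N, by positivity, fun h x => ?_⟩
  refine (norm_fwdDiff_iter_le_of_norm_iteratedFDeriv_le (f.smooth m)
    (B := C * ((1 + m) ^ N * (1 + ‖h‖) ^ N * (1 + ‖x‖) ^ (-N))) fun s hs => ?_).trans_eq (by ring)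
  refine (hf _).trans (mul_le_mul_of_nonneg_left ?_ hC)
  refine (one_add_norm_add_rpow_neg_le hN _ _).trans
    (mul_le_mul_of_nonneg_right ?_ (by positivity))
  rw [← Real.mul_rpow (by positivity) (by positivity), norm_smul, Real.norm_of_nonneg hs.1]
  refine Real.rpow_le_rpow (by have := hs.1; positivity) ?_ hN
  nlinarith [norm_nonneg h, mul_le_mul_of_nonneg_right hs.2 (norm_nonneg h), hs.1, hs.2]

lemma exists_norm_fwdDiff_iter_schwartz_le_min (m : ℕ) :
    ∃ C, 0 ≤ C ∧ ∀ h x, ‖Δ_[h] ^[m] f x‖ ≤ C * min 1 (‖h‖ ^ m) := by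
  obtain ⟨C₀, -, hf⟩ := exists_norm_schwartz_le f 0
  obtain ⟨C₁, hC₁, hdiff⟩ := exists_norm_fwdDiff_iter_schwartz_le f m le_rfl
  simp only [neg_zero, Real.rpow_zero, mul_one] at hf hdiff
  refine ⟨max (2 ^ m * C₀) C₁, le_max_of_le_right hC₁, fun h x => ?_⟩
  rw [mul_min_of_nonneg _ _ (le_max_of_le_right hC₁), mul_one]
  refine le_min ((norm_fwdDiff_iter_le hf m h x).trans (le_max_left _ _)) ((hdiff h x).trans ?_)
  exact mul_le_mul_of_nonneg_right (le_max_right _ _) (by positivity)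

variable [FiniteDimensional ℝ V] [MeasurableSpace V] [BorelSpace V]

lemma integrable_one_add_norm_rpow_mul_norm_schwartz (μ : Measure V) [μ.IsAddHaarMeasure] (N : ℝ) :
    Integrable (fun x => (1 + ‖x‖) ^ N * ‖f x‖) μ := by
  set d : ℝ := (Module.finrank ℝ V : ℝ)
  obtain ⟨C, -, hC⟩ := exists_norm_schwartz_le f (N + (d + 1))
  refine ((integrable_one_add_norm (E := V) (r := d + 1) (by simp [d])).const_mul C).mono'
    ((continuous_one_add_norm_rpow N).mul f.continuous.norm).aestronglyMeasurable
    (.of_forall fun x => ?_)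
  rw [Real.norm_of_nonneg (by positivity)]
  refine (mul_le_mul_of_nonneg_left (hC x) (by positivity)).trans_eq ?_
  rw [mul_left_comm, ← Real.rpow_add (by positivity)]
  congr 2
  ring

lemma exists_integral_norm_fwdDiff_iter_schwartz_le (m : ℕ) (μ : Measure V)
    [μ.IsAddHaarMeasure] :
    ∃ C, 0 ≤ C ∧ ∀ h, ∫ x, ‖Δ_[h] ^[m] f x‖ ∂μ ≤ C * min 1 (‖h‖ ^ m) := by
  set N : ℝ := Module.finrank ℝ V + 1
  have hN : 0 ≤ N := by positivity
  have hw : Integrable (fun x : V => (1 + ‖x‖) ^ (-N)) μ := integrable_one_add_norm (by simp [N])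
  obtain ⟨C, hC, hf⟩ := exists_norm_fwdDiff_iter_schwartz_le f m hN
  set A := 2 ^ m * ∫ x, ‖f x‖ ∂μ
  set B := C * 2 ^ N * ∫ x : V, (1 + ‖x‖) ^ (-N) ∂μ
  have hA : 0 ≤ A := mul_nonneg (by positivity) (integral_nonneg fun x => norm_nonneg _)
  have hlarge : ∀ h, ∫ x, ‖Δ_[h] ^[m] f x‖ ∂μ ≤ A :=
    integral_norm_fwdDiff_iter_le f.integrable m
  refine ⟨max A B, le_max_of_le_left hA, fun h => ?_⟩
  rcases le_total 1 ‖h‖ with h1 | h1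
  · rw [min_eq_left (one_le_pow₀ h1), mul_one]
    exact (hlarge h).trans (le_max_left _ _)
  · rw [min_eq_right (pow_le_one₀ (norm_nonneg h) h1)]
    calc ∫ x, ‖Δ_[h] ^[m] f x‖ ∂μ ≤ ∫ x : V, C * ‖h‖ ^ m * 2 ^ N * (1 + ‖x‖) ^ (-N) ∂μ := by
          refine integral_mono (integrable_fwdDiff_iter f.integrable m h).norm (hw.const_mul _)
            fun x => (hf h x).trans (mul_le_mul_of_nonneg_right ?_ (by positivity))
          exact mul_le_mul_of_nonneg_left
            (Real.rpow_le_rpow (by positivity) (by linarith) hN) (by positivity)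
      _ = B * ‖h‖ ^ m := by rw [integral_const_mul]; ring
      _ ≤ max A B * ‖h‖ ^ m := mul_le_mul_of_nonneg_right (le_max_right _ _) (by positivity)

end SchwartzDecay

/-! ### Lévy operators and their symbols -/

section PlaneWave

variable {V : Type*} [NormedAddCommGroup V] [InnerProductSpace ℝ V]

/-- The character `x ↦ exp (2πi ⟪ξ, x⟫)` of frequency `ξ`, in the normalization of Mathlib's Fourier
transform. -/
noncomputable def planeWave (ξ : V) : AddChar V ℂ where
  toFun x := Real.fourierChar (inner ℝ ξ x)
  map_zero_eq_one' := by simp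
  map_add_eq_mul' x y := by simp [inner_add_right, AddChar.map_add_eq_mul]

lemma planeWave_apply (ξ x : V) : planeWave ξ x = Real.fourierChar (inner ℝ ξ x) := rfl

@[simp] lemma norm_planeWave (ξ x : V) : ‖planeWave ξ x‖ = 1 := Circle.norm_coe _

lemma continuous_planeWave : Continuous fun p : V × V => planeWave p.1 p.2 := by
  have : Continuous fun t : ℝ => (Real.fourierChar t : ℂ) := by fun_prop
  exact this.comp continuous_inner

lemma norm_planeWave_sub_one_le (ξ x : V) : ‖planeWave ξ x - 1‖ ≤ 2 * π * (‖ξ‖ * ‖x‖) := by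
  have hexp : planeWave ξ x = Complex.exp (Complex.I * ↑(2 * π * inner ℝ ξ x)) := by
    rw [planeWave_apply, Real.fourierChar_apply, mul_comm]
  rw [hexp]
  refine Real.norm_exp_I_mul_ofReal_sub_one_le.trans ?_
  rw [norm_mul, Real.norm_of_nonneg (by positivity)]
  exact mul_le_mul_of_nonneg_left (norm_inner_le_norm ξ x) (by positivity)

lemma norm_fwdDiff_iter_planeWave_le (ξ h x : V) (m : ℕ) :
    ‖Δ_[h] ^[m] (planeWave ξ) x‖ ≤ (2 * π * (1 + ‖ξ‖)) ^ m * min 1 (‖h‖ ^ m) := by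
  have hπ := Real.pi_gt_three
  have hξ := norm_nonneg ξ
  rw [fwdDiff_addChar_eq, norm_mul, norm_planeWave, mul_one, norm_pow,
    mul_min_of_nonneg _ _ (by positivity), mul_one, ← mul_pow]
  refine le_min (pow_le_pow_left₀ (norm_nonneg _) ?_ m) (pow_le_pow_left₀ (norm_nonneg _) ?_ m)
  · calc ‖planeWave ξ h - 1‖ ≤ ‖planeWave ξ h‖ + ‖(1 : ℂ)‖ := norm_sub_le _ _
      _ = 2 := by rw [norm_planeWave, norm_one]; norm_num
      _ ≤ 2 * π * (1 + ‖ξ‖) := by nlinarith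
  · refine (norm_planeWave_sub_one_le ξ h).trans ?_
    rw [mul_assoc (2 * π)]
    gcongr
    linarith

lemma contDiff_planeWave (x : V) : ContDiff ℝ ∞ fun ξ => planeWave ξ x := by
  simp only [planeWave_apply, Real.fourierChar_apply]
  exact ((Complex.ofRealCLM.contDiff.comp
    (contDiff_const.mul (contDiff_id.inner ℝ contDiff_const))).mul contDiff_const).cexp

variable [MeasurableSpace V] [BorelSpace V] [FiniteDimensional ℝ V]

lemma fourierInv_eq_integral_planeWave (F : V → ℂ) (x : V) :
    𝓕⁻ F x = ∫ ξ, planeWave ξ x * F ξ := by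
  rw [Real.fourierInv_eq]
  rfl

lemma integrable_planeWave_mul {F : V → ℂ} (hF : Integrable F) (x : V) :
    Integrable fun ξ => planeWave ξ x * F ξ :=
  hF.bdd_mul (c := 1)
    (continuous_planeWave.comp (.prodMk continuous_id continuous_const)).aestronglyMeasurable
    (.of_forall fun ξ => (norm_planeWave ξ x).le)

lemma fwdDiff_iter_fourierInv {F : V → ℂ} (hF : Integrable F) (m : ℕ) (h x : V) :
    Δ_[h] ^[m] (𝓕⁻ F) x = ∫ ξ, Δ_[h] ^[m] (planeWave ξ) x * F ξ := by
  simp only [fwdDiff_iter_eq_sum_shift, fourierInv_eq_integral_planeWave, Finset.sum_mul,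
    zsmul_eq_mul, mul_assoc]
  rw [integral_finsetSum _ fun k _ => (integrable_planeWave_mul hF _).const_mul _]
  simp only [integral_const_mul]

end PlaneWave

/-- An operator of Lévy type `f ↦ ∫ (Δ_y ^ m f) (x - c y) dν(y)`: a translation invariant average
of differences of order `m`, recentred by `c` steps, against a Lévy measure `ν`. Up to sign, `m = 1`
and `c = 0` gives Marchaud derivatives, `m = 2` and `c = 1` gives fractional Laplacians. -/
structure LevyOperator (V : Type*) [NormedAddCommGroup V] [MeasurableSpace V] where
  order : ℕ
  shift : ℕ
  measure : Measure V
  order_ne_zero : order ≠ 0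
  sFinite : SFinite measure
  integrable_min : Integrable (fun y => min 1 (‖y‖ ^ order)) measure

namespace LevyOperator

attribute [instance] sFinite

section Basic

variable {V F : Type*} [NormedAddCommGroup V] [MeasurableSpace V] [NormedAddCommGroup F]
  (L : LevyOperator V)

lemma continuous_fwdDiff_iter_sub {f : V → F} (hf : Continuous f) :
    Continuous fun p : V × V => Δ_[p.2] ^[L.order] f (p.1 - L.shift • p.2) :=
  (continuous_fwdDiff_iter hf L.order).comp (by fun_prop : Continuous fun p : V × V =>
    (p.2, p.1 - L.shift • p.2))

variable [NormedSpace ℝ F]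

/-- The action of a Lévy operator on functions. -/
noncomputable def op (f : V → F) (x : V) : F :=
  ∫ y, Δ_[y] ^[L.order] f (x - L.shift • y) ∂L.measure

variable [NormedSpace ℝ V] [BorelSpace V] [FiniteDimensional ℝ V]

lemma integrable_fwdDiff_iter_sub (f : 𝓢(V, F)) (x : V) :
    Integrable (fun y => Δ_[y] ^[L.order] f (x - L.shift • y)) L.measure := by
  obtain ⟨C, -, hf⟩ := exists_norm_fwdDiff_iter_schwartz_le_min f L.order
  exact (L.integrable_min.const_mul C).mono'
    ((L.continuous_fwdDiff_iter_sub f.continuous).comp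
      (continuous_const.prodMk continuous_id)).aestronglyMeasurable (.of_forall fun y => hf y _)

lemma op_clm_comp {G : Type*} [NormedAddCommGroup G] [NormedSpace ℝ G] [CompleteSpace F]
    [CompleteSpace G] (B : F →L[ℝ] G) (f : 𝓢(V, F)) (x : V) :
    L.op (fun y => B (f y)) x = B (L.op f x) := by
  rw [op, op, ← B.integral_comp_comm (L.integrable_fwdDiff_iter_sub f x)]
  simp only [fwdDiff_iter_eq_sum_shift, map_sum, map_zsmul]

lemma integrable_uncurry_fwdDiff_iter_sub (f : 𝓢(V, F)) (μ : Measure V) [μ.IsAddHaarMeasure] :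
    Integrable (fun p : V × V => Δ_[p.2] ^[L.order] f (p.1 - L.shift • p.2))
      (μ.prod L.measure) := by
  obtain ⟨C, -, hf⟩ := exists_integral_norm_fwdDiff_iter_schwartz_le f L.order μ
  have hmeas : AEStronglyMeasurable
      (fun p : V × V => Δ_[p.2] ^[L.order] f (p.1 - L.shift • p.2)) (μ.prod L.measure) :=
    (L.continuous_fwdDiff_iter_sub f.continuous).aestronglyMeasurable
  refine (integrable_prod_iff' hmeas).2 ⟨.of_forall fun y => ?_, ?_⟩
  · exact (integrable_fwdDiff_iter (f.integrable (μ := μ)) L.order y).comp_sub_right (L.shift • y)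
  · refine (L.integrable_min.const_mul C).mono' hmeas.norm.prod_swap.integral_prod_right'
      (.of_forall fun y => ?_)
    rw [Real.norm_of_nonneg (integral_nonneg fun x => norm_nonneg _),
      integral_sub_right_eq_self (μ := μ) (‖Δ_[y] ^[L.order] f ·‖) (L.shift • y)]
    exact hf y

lemma integrable_op (f : 𝓢(V, F)) (μ : Measure V) [μ.IsAddHaarMeasure] :
    Integrable (L.op f) μ :=
  (L.integrable_uncurry_fwdDiff_iter_sub f μ).integral_prod_left

lemma integral_op_eq_zero (f : 𝓢(V, F)) (μ : Measure V) [μ.IsAddHaarMeasure] :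
    ∫ x, L.op f x ∂μ = 0 := by
  simp only [op]
  rw [integral_integral_swap (L.integrable_uncurry_fwdDiff_iter_sub f μ)]
  simp_rw [fun y => integral_sub_right_eq_self (μ := μ) (Δ_[y] ^[L.order] f) (L.shift • y),
    integral_fwdDiff_iter_eq_zero f.integrable L.order_ne_zero, integral_zero]

end Basic

section Map

variable {V W F : Type*} [NormedAddCommGroup V] [MeasurableSpace V] [NormedSpace ℝ V]
  [BorelSpace V] [NormedAddCommGroup W] [NormedSpace ℝ W] [FiniteDimensional ℝ W]
  [MeasurableSpace W] [BorelSpace W] [NormedAddCommGroup F] [NormedSpace ℝ F] (L : LevyOperator V)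

/-- The Lévy operator on `W` that acts in the directions of the image of `A : V → W`. -/
noncomputable def map (A : V →L[ℝ] W) : LevyOperator W where
  order := L.order
  shift := L.shift
  measure := L.measure.map A
  order_ne_zero := L.order_ne_zero
  sFinite := inferInstance
  integrable_min := by
    have hcont : Continuous fun y : W => min 1 (‖y‖ ^ L.order) := by fun_prop
    rw [integrable_map_measure hcont.aestronglyMeasurable A.continuous.aemeasurable]
    refine (L.integrable_min.const_mul (max 1 (‖A‖ ^ L.order))).mono'
      (hcont.comp A.continuous).aestronglyMeasurable (.of_forall fun y => ?_)
    rw [Function.comp_apply, Real.norm_of_nonneg (by positivity),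
      mul_min_of_nonneg _ _ (by positivity), mul_one]
    refine min_le_min (le_max_left _ _) ?_
    calc ‖A y‖ ^ L.order ≤ (‖A‖ * ‖y‖) ^ L.order :=
          pow_le_pow_left₀ (norm_nonneg _) (A.le_opNorm y) _
      _ ≤ max 1 (‖A‖ ^ L.order) * ‖y‖ ^ L.order := by
          rw [mul_pow]
          exact mul_le_mul_of_nonneg_right (le_max_right _ _) (by positivity)

lemma op_map {f : W → F} (hf : Continuous f) (A : V →L[ℝ] W) (b : W) (x : V) :
    (L.map A).op f (A x + b) = L.op (fun y => f (A y + b)) x := by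
  have hcont := ((L.map A).continuous_fwdDiff_iter_sub hf).comp
    (continuous_const.prodMk continuous_id : Continuous fun y : W => (A x + b, y))
  refine (integral_map A.continuous.aemeasurable hcont.aestronglyMeasurable).trans ?_
  refine integral_congr_ae (.of_forall fun y => ?_)
  have hshift : A x + b - L.shift • A y = A (x - L.shift • y) + b := by
    rw [map_sub, map_nsmul]
    abel
  exact (congrArg _ hshift).trans (fwdDiff_iter_map_add A.toLinearMap.toAddMonoidHom f _ y _ b)

end Map

section Symbol

variable {V W : Type*} [NormedAddCommGroup V] [InnerProductSpace ℝ V] [MeasurableSpace V]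
  (L : LevyOperator V)

/-- The Fourier multiplier of a Lévy operator. -/
noncomputable def symbol (ξ : V) : ℂ := L.op (planeWave ξ) 0

lemma symbol_eq_integral (ξ : V) : L.symbol ξ =
    ∫ y, (planeWave ξ y - 1) ^ L.order * (planeWave ξ y)⁻¹ ^ L.shift ∂L.measure := by
  simp only [symbol, op, fwdDiff_addChar_eq, zero_sub, AddChar.map_neg_eq_inv,
    AddChar.map_nsmul_eq_pow, inv_pow]

/-- The symbol is smooth and has negative real part away from the origin, so that it can be inverted
there, alone or after adding the symbol of another elliptic operator. -/
structure IsElliptic : Prop where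
  contDiffAt_symbol : ∀ ξ ≠ 0, ContDiffAt ℝ ∞ L.symbol ξ
  re_symbol_neg : ∀ ξ ≠ 0, (L.symbol ξ).re < 0

variable {L} in
lemma IsElliptic.symbol_ne_zero (hL : L.IsElliptic) {ξ : V} (hξ : ξ ≠ 0) : L.symbol ξ ≠ 0 :=
  fun h => (hL.re_symbol_neg ξ hξ).ne (by rw [h, Complex.zero_re])

lemma op_planeWave (ξ x : V) : L.op (planeWave ξ) x = planeWave ξ x * L.symbol ξ := by
  rw [symbol, op, op, ← integral_const_mul]
  congr 1 with y
  rw [fwdDiff_addChar_eq, fwdDiff_addChar_eq, sub_eq_add_neg x, AddChar.map_add_eq_mul, zero_sub]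
  ring

variable [FiniteDimensional ℝ V] [BorelSpace V]

lemma integrable_uncurry_fwdDiff_iter_planeWave_mul (F : 𝓢(V, ℂ)) (x : V) :
    Integrable (fun p : V × V =>
      Δ_[p.1] ^[L.order] (planeWave p.2) (x - L.shift • p.1) * F p.2)
      (L.measure.prod volume) := by
  have hwave := continuous_planeWave (V := V)
  have hF := F.continuous
  have hweight : Integrable fun ξ : V => (2 * π * (1 + ‖ξ‖)) ^ L.order * ‖F ξ‖ := by
    simp_rw [mul_pow (2 * π), mul_assoc, ← Real.rpow_natCast (1 + ‖_‖)]
    exact (integrable_one_add_norm_rpow_mul_norm_schwartz F volume L.order).const_mul _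
  refine (L.integrable_min.mul_prod hweight).mono' ?_ (.of_forall fun p => ?_)
  · simp only [fwdDiff_addChar_eq]
    exact Continuous.aestronglyMeasurable (by fun_prop)
  · rw [norm_mul, ← mul_assoc, mul_comm (min _ _)]
    exact mul_le_mul_of_nonneg_right (norm_fwdDiff_iter_planeWave_le _ _ _ _) (norm_nonneg _)

lemma integrable_symbol_mul (F : 𝓢(V, ℂ)) : Integrable fun ξ => L.symbol ξ * F ξ := by
  simpa only [symbol, op, integral_mul_const] using
    (L.integrable_uncurry_fwdDiff_iter_planeWave_mul F 0).integral_prod_right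

lemma op_fourierInv (F : 𝓢(V, ℂ)) (x : V) :
    L.op (𝓕⁻ (F : V → ℂ)) x = 𝓕⁻ (fun ξ => L.symbol ξ * F ξ) x := by
  calc L.op (𝓕⁻ (F : V → ℂ)) x
      = ∫ y, (∫ ξ, Δ_[y] ^[L.order] (planeWave ξ) (x - L.shift • y) * F ξ) ∂L.measure := by
        simp only [op, fwdDiff_iter_fourierInv F.integrable]
    _ = ∫ ξ, ∫ y, Δ_[y] ^[L.order] (planeWave ξ) (x - L.shift • y) * F ξ ∂L.measure :=
        integral_integral_swap (L.integrable_uncurry_fwdDiff_iter_planeWave_mul F x)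
    _ = ∫ ξ, L.op (planeWave ξ) x * F ξ := by simp only [integral_mul_const, op]
    _ = 𝓕⁻ (fun ξ => L.symbol ξ * F ξ) x := by
        rw [fourierInv_eq_integral_planeWave]
        simp only [op_planeWave, mul_assoc]

variable [NormedAddCommGroup W] [InnerProductSpace ℝ W] [FiniteDimensional ℝ W]
  [MeasurableSpace W] [BorelSpace W]

lemma symbol_map (A : V →L[ℝ] W) (ξ : W) : (L.map A).symbol ξ = L.symbol (A.adjoint ξ) := by
  have hcont : Continuous (planeWave ξ) :=
    continuous_planeWave.comp (continuous_const.prodMk continuous_id)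
  have hop := L.op_map hcont A 0 0
  rw [map_zero, add_zero] at hop
  rw [symbol, hop, symbol]
  congr 1 with y
  rw [add_zero, planeWave_apply, planeWave_apply, A.adjoint_inner_left]

end Symbol

end LevyOperator

/-! ### Functions whose spectrum is the origin -/

section WeightedIntegrable

variable {V F : Type*} [NormedAddCommGroup V] [NormedAddCommGroup F] [NormedSpace ℝ F]

/-- Polynomial growth in the mean: integrability against the weight `(1 + ‖x‖) ^ (-N)`. -/
def WeightedIntegrable [MeasureSpace V] (N : ℝ) (U : V → F) : Prop :=
  Integrable fun x => (1 + ‖x‖) ^ (-N) • U x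

namespace WeightedIntegrable

lemma locallyIntegrable [MeasureSpace V] [BorelSpace V] [LocallyCompactSpace V] {N : ℝ}
    {U : V → F} (hU : WeightedIntegrable N U) : LocallyIntegrable U := by
  have hweight : ∀ x, (1 + ‖x‖) ^ N • (1 + ‖x‖) ^ (-N) • U x = U x := fun x => by
    rw [smul_smul, ← Real.rpow_add (by positivity), add_neg_cancel, Real.rpow_zero, one_smul]
  simpa only [hweight] using LocallyIntegrable.continuous_smul (continuous_one_add_norm_rpow N)
    (Integrable.locallyIntegrable hU)

lemma norm_mul_le {C N : ℝ} {U f : V → ℂ} (hf : ∀ x, ‖f x‖ ≤ C * (1 + ‖x‖) ^ (-N)) (x : V) :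
    ‖U x * f x‖ ≤ C * ‖(1 + ‖x‖) ^ (-N) • U x‖ := by
  rw [norm_mul, norm_smul, Real.norm_of_nonneg (by positivity), ← mul_assoc, mul_comm]
  exact mul_le_mul_of_nonneg_right (hf x) (norm_nonneg _)

variable [InnerProductSpace ℝ V] [FiniteDimensional ℝ V] [MeasurableSpace V] [BorelSpace V]
  {C N : ℝ} {U f : V → ℂ}

lemma integrable_mul (hU : WeightedIntegrable N U) (hfm : AEStronglyMeasurable f)
    (hf : ∀ x, ‖f x‖ ≤ C * (1 + ‖x‖) ^ (-N)) : Integrable fun x => U x * f x :=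
  (hU.norm.const_mul C).mono' (hU.locallyIntegrable.aestronglyMeasurable.mul hfm)
    (.of_forall (norm_mul_le hf))

lemma norm_integral_mul_le (hU : WeightedIntegrable N U)
    (hf : ∀ x, ‖f x‖ ≤ C * (1 + ‖x‖) ^ (-N)) :
    ‖∫ x, U x * f x‖ ≤ C * ∫ x, ‖(1 + ‖x‖) ^ (-N) • U x‖ := by
  rw [← integral_const_mul]
  exact norm_integral_le_of_norm_le (hU.norm.const_mul C) (.of_forall (norm_mul_le hf))

lemma integrable_mul_schwartz_sub (hN : 0 ≤ N) (hU : WeightedIntegrable N U) (f : 𝓢(V, ℂ))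
    (y : V) : Integrable fun x => U x * f (x - y) := by
  obtain ⟨C, -, hC⟩ := exists_norm_schwartz_sub_le f hN
  exact hU.integrable_mul (f.continuous.comp (continuous_sub_right y)).aestronglyMeasurable
    fun x => hC x y

lemma continuous_integral_mul_schwartz_sub (hN : 0 ≤ N) (hU : WeightedIntegrable N U)
    (f : 𝓢(V, ℂ)) : Continuous fun y => ∫ x, U x * f (x - y) := by
  obtain ⟨C, hC, hf⟩ := exists_norm_schwartz_sub_le f hN
  refine continuous_iff_continuousAt.2 fun y₀ => continuousAt_of_dominated
    (bound := fun x => C * (2 + ‖y₀‖) ^ N * ‖(1 + ‖x‖) ^ (-N) • U x‖)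
    (.of_forall fun y => (integrable_mul_schwartz_sub hN hU f y).aestronglyMeasurable) ?_
    (hU.norm.const_mul _) (.of_forall fun x => ?_)
  · filter_upwards [Metric.ball_mem_nhds y₀ one_pos] with y hy
    have hy' : 1 + ‖y‖ ≤ 2 + ‖y₀‖ := by
      linarith [norm_le_norm_add_norm_sub' y y₀, mem_ball_iff_norm.1 hy]
    refine .of_forall (norm_mul_le fun x => (hf x y).trans ?_)
    gcongr
  · have := f.continuous
    fun_prop

lemma fwdDiff_iter_integral_mul_schwartz_sub (hN : 0 ≤ N) (hU : WeightedIntegrable N U)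
    (f : 𝓢(V, ℂ)) (m : ℕ) (h y : V) :
    Δ_[h] ^[m] (fun y => ∫ x, U x * f (x - y)) y = ∫ x, U x * Δ_[-h] ^[m] f (x - y) := by
  have hshift : ∀ (k : ℕ) x, x - y + k • -h = x - (y + k • h) := fun k x => by
    rw [smul_neg, ← sub_eq_add_neg, sub_sub]
  simp only [fwdDiff_iter_eq_sum_shift, hshift, zsmul_eq_mul, Finset.mul_sum,
    mul_left_comm (U _)]
  rw [integral_finsetSum _ fun k _ =>
    (hU.integrable_mul_schwartz_sub hN f (y + k • h)).const_mul _]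
  simp only [integral_const_mul]

lemma integral_mul_integral_mul_schwartz_sub (hN : 0 ≤ N) (hU : WeightedIntegrable N U)
    (f g : 𝓢(V, ℂ)) :
    ∫ y, g y * ∫ x, U x * f (x - y) = ∫ x, U x * ∫ y, f (x - y) * g y := by
  obtain ⟨C, -, hf⟩ := exists_norm_schwartz_sub_le f hN
  simp only [← integral_const_mul]
  rw [integral_integral_swap]
  · congr! 4
    ring
  have hg := integrable_one_add_norm_rpow_mul_norm_schwartz g volume N
  refine ((hg.mul_prod hU.norm).const_mul C).mono' ?_ (.of_forall fun p => ?_)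
  · have hfc : Continuous fun p : V × V => f (p.2 - p.1) := f.continuous.comp (by fun_prop)
    exact (g.continuous.comp continuous_fst).aestronglyMeasurable.mul
      (hU.locallyIntegrable.aestronglyMeasurable.comp_snd.mul hfc.aestronglyMeasurable)
  · calc ‖g p.1 * (U p.2 * f (p.2 - p.1))‖
        ≤ ‖g p.1‖ * (C * (1 + ‖p.1‖) ^ N * ‖(1 + ‖p.2‖) ^ (-N) • U p.2‖) := by
          rw [norm_mul]
          exact mul_le_mul_of_nonneg_left (norm_mul_le (fun x => hf x p.1) p.2) (norm_nonneg _)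
      _ = C * ((1 + ‖p.1‖) ^ N * ‖g p.1‖ * ‖(1 + ‖p.2‖) ^ (-N) • U p.2‖) := by ring

end WeightedIntegrable

end WeightedIntegrable

section LowPass

variable {V : Type*} [NormedAddCommGroup V] [InnerProductSpace ℝ V] [FiniteDimensional ℝ V]

variable (V) in
/-- A cutoff in frequency space, equal to one near the origin. -/
noncomputable def freqBump : ContDiffBump (0 : V) := ⟨1, 2, one_pos, one_lt_two⟩

/-- The cutoff to frequencies of size about `2 ^ k`, modulated so that its inverse Fourier transform
is centred at `y`. -/
noncomputable def modulatedCutoff (k : ℤ) (y ξ : V) : ℂ :=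
  planeWave ξ (-y) * freqBump V (((2 : ℝ) ^ k)⁻¹ • ξ)

lemma contDiff_modulatedCutoff (k : ℤ) (y : V) : ContDiff ℝ ∞ (modulatedCutoff k y) :=
  (contDiff_planeWave (-y)).mul
    (Complex.ofRealCLM.contDiff.comp ((freqBump V).contDiff.comp (contDiff_const_smul _)))

lemma hasCompactSupport_modulatedCutoff (k : ℤ) (y : V) :
    HasCompactSupport (modulatedCutoff k y) :=
  (((freqBump V).hasCompactSupport.comp_smul (by positivity)).comp_left
    Complex.ofReal_zero).mul_left

lemma zero_notMem_tsupport_modulatedCutoff_sub (k l : ℤ) (y : V) :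
    (0 : V) ∉ tsupport (modulatedCutoff k y - modulatedCutoff l y) := by
  have heq_one : ∀ j : ℤ, ∀ᶠ ξ in 𝓝 (0 : V), freqBump V (((2 : ℝ) ^ j)⁻¹ • ξ) = 1 := fun j => by
    have hlim : Tendsto (fun ξ : V => ((2 : ℝ) ^ j)⁻¹ • ξ) (𝓝 0) (𝓝 0) :=
      (continuous_const_smul _).tendsto' _ _ (smul_zero _)
    exact hlim.eventually (freqBump V).eventuallyEq_one
  rw [notMem_tsupport_iff_eventuallyEq]
  filter_upwards [heq_one k, heq_one l] with ξ hk hl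
  simp [modulatedCutoff, hk, hl]

variable [MeasurableSpace V] [BorelSpace V]

/-- The convolution kernel of the cutoff to frequencies of size about `2 ^ k`. -/
noncomputable def lowPass (k : ℤ) : 𝓢(V, ℂ) :=
  𝓕⁻ ((hasCompactSupport_modulatedCutoff k (0 : V)).toSchwartzMap (contDiff_modulatedCutoff k 0))

lemma lowPass_apply (k : ℤ) (x : V) : lowPass k x = 𝓕⁻ (modulatedCutoff k (0 : V)) x := by
  rw [lowPass, SchwartzMap.fourierInv_coe]
  rfl

lemma fourierInv_modulatedCutoff (k : ℤ) (x y : V) :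
    𝓕⁻ (modulatedCutoff k y) x = lowPass k (x - y) := by
  have hmode : ∀ ξ, planeWave ξ (x - y) * modulatedCutoff k 0 ξ =
      planeWave ξ x * modulatedCutoff k y ξ := fun ξ => by
    simp [modulatedCutoff, sub_eq_add_neg, AddChar.map_add_eq_mul, mul_assoc]
  rw [lowPass_apply]
  simp only [fourierInv_eq_integral_planeWave, hmode]

lemma lowPass_eq_mul_lowPass_zero (k : ℤ) (x : V) :
    lowPass k x = ((2 : ℝ) ^ k) ^ Module.finrank ℝ V • lowPass 0 (((2 : ℝ) ^ k) • x) := by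
  simp only [lowPass_apply, fourierInv_eq_integral_planeWave]
  have hscale := Measure.integral_comp_smul (volume : Measure V) (fun ξ =>
    planeWave ξ (((2 : ℝ) ^ k) • x) * modulatedCutoff 0 0 ξ) ((2 : ℝ) ^ k)⁻¹
  rw [inv_pow, inv_inv, abs_of_pos (by positivity)] at hscale
  rw [← hscale]
  have hne : (2 : ℝ) ^ k ≠ 0 := by positivity
  congr 1 with ξ
  simp [modulatedCutoff, planeWave_apply, inner_smul_left, inner_smul_right,
    mul_inv_cancel_left₀ hne]

lemma integral_lowPass_zero : ∫ x : V, lowPass 0 x = 1 := by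
  set B : 𝓢(V, ℂ) :=
    (hasCompactSupport_modulatedCutoff 0 0).toSchwartzMap (contDiff_modulatedCutoff 0 0)
  have hone : freqBump V 0 = 1 := (freqBump V).eventuallyEq_one.self_of_nhds
  calc ∫ x : V, lowPass 0 x = (𝓕 (𝓕⁻ B) : 𝓢(V, ℂ)) 0 := by
        rw [SchwartzMap.fourier_coe, Real.fourier_eq]
        simp only [inner_zero_right, neg_zero, AddChar.map_zero_eq_one, one_smul]
        rfl
    _ = B 0 := by rw [FourierTransform.fourier_fourierInv_eq]
    _ = modulatedCutoff 0 0 0 := rfl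
    _ = 1 := by simp [modulatedCutoff, hone]

end LowPass

section SpectrumAtOrigin

variable {V : Type*} [NormedAddCommGroup V] [InnerProductSpace ℝ V] [FiniteDimensional ℝ V]
  [MeasurableSpace V] [BorelSpace V] {U : V → ℂ} {N : ℝ}

/-- All dyadic low-pass averages of `U` agree; equivalently, the Fourier transform of `U` is
supported at the origin. -/
def IsLowPassInvariant (U : V → ℂ) : Prop :=
  ∀ (k : ℤ) (y : V), ∫ x, U x * lowPass k (x - y) = ∫ x, U x * lowPass 0 (x - y)

lemma integral_mul_lowPass_eq_iff (hN : 0 ≤ N) (hU : WeightedIntegrable N U) (k l : ℤ) (y : V) :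
    ∫ x, U x * lowPass k (x - y) = ∫ x, U x * lowPass l (x - y) ↔
      ∫ x, U x * 𝓕⁻ (modulatedCutoff k y - modulatedCutoff l y) x = 0 := by
  have hint : ∀ j : ℤ, Integrable (modulatedCutoff j y) := fun j =>
    (contDiff_modulatedCutoff j y).continuous.integrable_of_hasCompactSupport
      (hasCompactSupport_modulatedCutoff j y)
  have hsub : ∀ x, 𝓕⁻ (modulatedCutoff k y - modulatedCutoff l y) x =
      lowPass k (x - y) - lowPass l (x - y) := fun x => by
    simp only [← fourierInv_modulatedCutoff, fourierInv_eq_integral_planeWave, Pi.sub_apply,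
      mul_sub]
    exact integral_sub (integrable_planeWave_mul (hint k) x) (integrable_planeWave_mul (hint l) x)
  simp only [hsub, mul_sub]
  rw [integral_sub (hU.integrable_mul_schwartz_sub hN _ y) (hU.integrable_mul_schwartz_sub hN _ y),
    sub_eq_zero]

lemma isLowPassInvariant_of_denseRange (hN : 0 ≤ N) (hU : WeightedIntegrable N U) {ι : Type*}
    {e : ι → V} (he : DenseRange e)
    (hspec : ∀ (k : ℤ) i, ∫ x, U x * 𝓕⁻ (modulatedCutoff k (e i) - modulatedCutoff 0 (e i)) x = 0) :
    IsLowPassInvariant U := fun k => congrFun (Continuous.ext_on he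
  (hU.continuous_integral_mul_schwartz_sub hN _) (hU.continuous_integral_mul_schwartz_sub hN _)
  (Set.forall_mem_range.2 fun i => (integral_mul_lowPass_eq_iff hN hU k 0 (e i)).2 (hspec k i)))

lemma isLowPassInvariant_of_integral_mul_fourierInv_eq_zero (hN : 0 ≤ N)
    (hU : WeightedIntegrable N U)
    (hspec : ∀ G : V → ℂ, ContDiff ℝ ∞ G → HasCompactSupport G → (0 : V) ∉ tsupport G →
      ∫ x, U x * 𝓕⁻ G x = 0) : IsLowPassInvariant U :=
  isLowPassInvariant_of_denseRange hN hU denseRange_id fun k y => hspec _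
    ((contDiff_modulatedCutoff k y).sub (contDiff_modulatedCutoff 0 y))
    ((hasCompactSupport_modulatedCutoff k y).sub (hasCompactSupport_modulatedCutoff 0 y))
    (zero_notMem_tsupport_modulatedCutoff_sub k 0 y)

lemma integral_lowPass_sub_mul (k : ℤ) (g : V → ℂ) (x : V) :
    ∫ y, lowPass k (x - y) * g y = ∫ w, lowPass 0 w * g (x - ((2 : ℝ) ^ k)⁻¹ • w) := by
  have hne : (2 : ℝ) ^ k ≠ 0 := by positivity
  have hscale := Measure.integral_comp_smul (volume : Measure V)
    (fun w => lowPass 0 w * g (x - ((2 : ℝ) ^ k)⁻¹ • w)) ((2 : ℝ) ^ k)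
  rw [abs_of_pos (by positivity), eq_inv_smul_iff₀ (by positivity), ← integral_smul] at hscale
  rw [← integral_sub_left_eq_self _ volume x, ← hscale]
  congr 1 with w
  rw [sub_sub_cancel, lowPass_eq_mul_lowPass_zero, smul_smul, inv_mul_cancel₀ hne, one_smul,
    smul_mul_assoc]

lemma tendsto_integral_mul_integral_lowPass (hN : 0 ≤ N) (hU : WeightedIntegrable N U)
    (g : 𝓢(V, ℂ)) :
    Tendsto (fun k : ℕ => ∫ x, U x * ∫ y, lowPass (k : ℤ) (x - y) * g y) atTop
      (𝓝 (∫ x, U x * g x)) := by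
  obtain ⟨C, hbound⟩ := exists_norm_mul_schwartz_sub_smul_le hN (lowPass 0) g
  set l : ℕ → ℝ := fun k => ((2 : ℝ) ^ (k : ℤ))⁻¹ with hl_def
  have hl : ∀ k, l k ∈ Icc (0 : ℝ) 1 := fun k =>
    ⟨by positivity, inv_le_one_of_one_le₀ (one_le_zpow₀ one_le_two (by simp))⟩
  have hl_lim : Tendsto l atTop (𝓝 0) := by
    simpa only [hl_def, zpow_natCast, Pi.inv_def] using
      (tendsto_pow_atTop_atTop_of_one_lt (one_lt_two (α := ℝ))).inv_tendsto_atTop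
  have hP := integrable_one_add_norm_rpow_mul_norm_schwartz (lowPass (V := V) 0) volume N
  have hcont : ∀ k, Continuous fun p : V × V => lowPass 0 p.2 * g (p.1 - l k • p.2) := fun k =>
    ((lowPass 0).continuous.comp continuous_snd).mul (g.continuous.comp (by fun_prop))
  have hconv : ∀ x, Tendsto (fun k => ∫ w, lowPass 0 w * g (x - l k • w)) atTop (𝓝 (g x)) := by
    intro x
    have hgx : ∫ w : V, lowPass 0 w * g x = g x := by
      rw [integral_mul_const, integral_lowPass_zero, one_mul]
    rw [← hgx]
    refine tendsto_integral_of_dominated_convergence _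
      (fun k => ((hcont k).comp (Continuous.prodMk_right x)).aestronglyMeasurable)
      (hP.const_mul _) (fun k => .of_forall (hbound _ (hl k) x)) (.of_forall fun w => ?_)
    refine ((g.continuous.tendsto x).comp ?_).const_mul _
    simpa using (hl_lim.smul_const w).const_sub x
  simp only [integral_lowPass_sub_mul]
  refine tendsto_integral_of_dominated_convergence _
    (fun k => hU.locallyIntegrable.aestronglyMeasurable.mul
      (hcont k).aestronglyMeasurable.integral_prod_right')
    (hU.norm.const_mul (C * ∫ w, (1 + ‖w‖) ^ N * ‖lowPass (V := V) 0 w‖))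
    (fun k => .of_forall (WeightedIntegrable.norm_mul_le fun x => ?_))
    (.of_forall fun x => (hconv x).const_mul _)
  refine (norm_integral_le_of_norm_le (hP.const_mul _)
    (.of_forall (hbound _ (hl k) x))).trans_eq ?_
  rw [integral_const_mul]
  ring

namespace IsLowPassInvariant

lemma ae_eq_integral_mul_lowPass (hN : 0 ≤ N) (hU : WeightedIntegrable N U)
    (hinv : IsLowPassInvariant U) : U =ᵐ[volume] fun y => ∫ x, U x * lowPass 0 (x - y) := by
  refine ae_eq_of_integral_contDiff_smul_eq hU.locallyIntegrable
    (hU.continuous_integral_mul_schwartz_sub hN _).locallyIntegrable fun g hg hgc => ?_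
  set G : 𝓢(V, ℂ) := (hgc.comp_left Complex.ofReal_zero).toSchwartzMap
    (Complex.ofRealCLM.contDiff.comp hg)
  have hlim := tendsto_integral_mul_integral_lowPass hN hU G
  simp only [← WeightedIntegrable.integral_mul_integral_mul_schwartz_sub hN hU, hinv _ _] at hlim
  have heq := tendsto_nhds_unique hlim tendsto_const_nhds
  have hG : ∀ x, G x = g x := fun _ => rfl
  calc ∫ x, g x • U x = ∫ x, U x * G x := by simp [hG, mul_comm]
    _ = ∫ y, G y * ∫ x, U x * lowPass 0 (x - y) := heq
    _ = ∫ y, g y • ∫ x, U x * lowPass 0 (x - y) := by simp [hG]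

lemma fwdDiff_iter_lowPass_eq (m : ℕ) (k : ℤ) (h x : V) :
    Δ_[h] ^[m] (lowPass k) x =
      ((2 : ℝ) ^ k) ^ Module.finrank ℝ V •
        Δ_[(2 : ℝ) ^ k • h] ^[m] (lowPass 0) ((2 : ℝ) ^ k • x) := by
  have hlow : (lowPass k : V → ℂ) =
      ((2 : ℝ) ^ k) ^ Module.finrank ℝ V • fun z => lowPass 0 ((2 : ℝ) ^ k • z) :=
    funext (lowPass_eq_mul_lowPass_zero k)
  have hdil := fwdDiff_iter_map_add (DistribSMul.toAddMonoidHom V ((2 : ℝ) ^ k))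
    (lowPass (V := V) 0) m h x 0
  simp only [add_zero, DistribSMul.toAddMonoidHom_apply] at hdil
  rw [hlow, fwdDiff_iter_const_smul, Pi.smul_apply, hdil]

lemma exists_norm_fwdDiff_iter_lowPass_le (m : ℕ) (hN : 0 ≤ N) (h y : V) :
    ∃ C, ∀ (k : ℕ) (x : V), ‖Δ_[h] ^[m] (lowPass (-(k : ℤ))) (x - y)‖ ≤
      C * ((2 : ℝ) ^ (-(k : ℤ))) ^ (Module.finrank ℝ V + m - N) * (1 + ‖x‖) ^ (-N) := by
  obtain ⟨C, hC, hbound⟩ := exists_norm_fwdDiff_iter_schwartz_le (lowPass (V := V) 0) m hN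
  refine ⟨C * ‖h‖ ^ m * (1 + ‖h‖) ^ N * (1 + ‖y‖) ^ N, fun k x => ?_⟩
  set a : ℝ := (2 : ℝ) ^ (-(k : ℤ))
  have ha : 0 < a := by positivity
  have ha1 : a ≤ 1 := zpow_le_one_of_nonpos₀ one_le_two (by simp)
  set d := Module.finrank ℝ V
  have hdecay : (1 + ‖a • (x - y)‖) ^ (-N) ≤ a ^ (-N) * ((1 + ‖y‖) ^ N * (1 + ‖x‖) ^ (-N)) := by
    calc (1 + ‖a • (x - y)‖) ^ (-N) ≤ (a * (1 + ‖x - y‖)) ^ (-N) := by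
          refine Real.rpow_le_rpow_of_nonpos (by positivity) ?_ (neg_nonpos.2 hN)
          rw [norm_smul, Real.norm_of_nonneg ha.le, mul_add, mul_one]
          gcongr
      _ = a ^ (-N) * (1 + ‖x - y‖) ^ (-N) := Real.mul_rpow ha.le (by positivity)
      _ ≤ a ^ (-N) * ((1 + ‖y‖) ^ N * (1 + ‖x‖) ^ (-N)) := by
          gcongr
          simpa [sub_eq_add_neg, norm_neg] using one_add_norm_add_rpow_neg_le hN x (-y)
  calc ‖Δ_[h] ^[m] (lowPass (-(k : ℤ))) (x - y)‖
      ≤ a ^ d * (C * (a * ‖h‖) ^ m * (1 + a * ‖h‖) ^ N * (1 + ‖a • (x - y)‖) ^ (-N)) := by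
        rw [fwdDiff_iter_lowPass_eq, norm_smul, Real.norm_of_nonneg (by positivity)]
        have := hbound (a • h) (a • (x - y))
        rw [norm_smul, Real.norm_of_nonneg ha.le] at this
        gcongr
    _ ≤ a ^ d * (C * (a * ‖h‖) ^ m * (1 + ‖h‖) ^ N *
          (a ^ (-N) * ((1 + ‖y‖) ^ N * (1 + ‖x‖) ^ (-N)))) := by
        gcongr
        exact mul_le_of_le_one_left (norm_nonneg h) ha1
    _ = C * ‖h‖ ^ m * (1 + ‖h‖) ^ N * (1 + ‖y‖) ^ N * a ^ (d + m - N) * (1 + ‖x‖) ^ (-N) := by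
        rw [sub_eq_add_neg, Real.rpow_add ha, Real.rpow_add ha, Real.rpow_natCast,
          Real.rpow_natCast]
        ring

lemma exists_continuous_ae_eq {m : ℕ} (hN : 0 ≤ N) (hNm : N < Module.finrank ℝ V + m)
    (hU : WeightedIntegrable N U) (hinv : IsLowPassInvariant U) :
    ∃ v : V → ℂ, Continuous v ∧ U =ᵐ[volume] v ∧ ∀ h x, Δ_[h] ^[m] v x = 0 := by
  refine ⟨_, hU.continuous_integral_mul_schwartz_sub hN _, ae_eq_integral_mul_lowPass hN hU hinv,
    fun h y => ?_⟩
  obtain ⟨C, hbound⟩ := exists_norm_fwdDiff_iter_lowPass_le m hN (-h) y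
  have hlim : Tendsto (fun k : ℕ => C * ((2 : ℝ) ^ (-(k : ℤ))) ^ (Module.finrank ℝ V + m - N) *
      ∫ x, ‖(1 + ‖x‖) ^ (-N) • U x‖) atTop (𝓝 0) := by
    have hzero : Tendsto (fun k : ℕ => (2 : ℝ) ^ (-(k : ℤ))) atTop (𝓝 0) := by
      simpa only [zpow_neg, zpow_natCast, Pi.inv_def] using
        (tendsto_pow_atTop_atTop_of_one_lt (one_lt_two (α := ℝ))).inv_tendsto_atTop
    have hpow := hzero.rpow_const (p := Module.finrank ℝ V + m - N) (.inr (by linarith))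
    rw [Real.zero_rpow (by linarith)] at hpow
    simpa using (hpow.const_mul C).mul_const (∫ x, ‖(1 + ‖x‖) ^ (-N) • U x‖)
  refine norm_le_zero_iff.1 (ge_of_tendsto' hlim fun k => ?_)
  simp only [← hinv (-(k : ℤ))]
  rw [hU.fwdDiff_iter_integral_mul_schwartz_sub hN]
  exact hU.norm_integral_mul_le (hbound k)

lemma exists_ae_eq_const (hN : 0 ≤ N) (hNd : N < Module.finrank ℝ V + 1)
    (hU : WeightedIntegrable N U) (hinv : IsLowPassInvariant U) : ∃ c, ∀ᵐ x, U x = c := by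
  obtain ⟨v, -, hUv, hv⟩ := exists_continuous_ae_eq (m := 1) hN (by simpa using hNd) hU hinv
  refine ⟨v 0, hUv.mono fun x hx => ?_⟩
  have hdiff : v (0 + x) - v 0 = 0 := hv x 0
  rw [hx, ← sub_eq_zero, ← hdiff, zero_add]

end IsLowPassInvariant

end SpectrumAtOrigin

/-! ### Functions with vanishing second differences -/

lemma apply_add_nsmul_of_fwdDiff_two_eq_zero {V : Type*} [AddCommMonoid V] {v : V → ℝ}
    (hv : ∀ h x, Δ_[h] ^[2] v x = 0) (x h : V) (k : ℕ) :
    v (x + k • h) = v x + k * (v (x + h) - v x) := by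
  have hstep : ∀ k : ℕ, Δ_[h] v (x + k • h) = Δ_[h] v x := fun k => by
    induction k with
    | zero => simp
    | succ k ih =>
      rw [← ih, succ_nsmul, ← add_assoc, ← sub_eq_zero]
      exact hv h _
  induction k with
  | zero => simp
  | succ k ih =>
    have hk : v (x + k • h + h) - v (x + k • h) = v (x + h) - v x := hstep k
    rw [succ_nsmul, ← add_assoc, Nat.cast_succ]
    linarith

lemma eq_of_fwdDiff_two_eq_zero_of_lower_bound {V : Type*} [NormedAddCommGroup V]
    [NormedSpace ℝ V] {v : V → ℝ} (hv : ∀ h x, Δ_[h] ^[2] v x = 0)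
    (hlow : ∀ ε > 0, ∀ᶠ x in Bornology.cobounded V, -ε * ‖x‖ ≤ v x) (x y : V) : v x = v y := by
  suffices hmono : ∀ x h, v x ≤ v (x + h) by
    have hle : ∀ x y, v x ≤ v y := fun x y => by simpa using hmono x (y - x)
    exact le_antisymm (hle x y) (hle y x)
  intro x h
  rcases eq_or_ne h 0 with rfl | hh
  · rw [add_zero]
  have hescape : Tendsto (fun k : ℕ => x + k • h) atTop (Bornology.cobounded V) := by
    refine (tendsto_const_add_cobounded x).comp (tendsto_norm_atTop_iff_cobounded.1 ?_)
    simpa [← Nat.cast_smul_eq_nsmul ℝ, norm_smul] using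
      tendsto_natCast_atTop_atTop.atTop_mul_const (norm_pos_iff.2 hh)
  have hslope : ∀ ε > 0, -ε * (‖x‖ + ‖h‖) ≤ v (x + h) - v x := fun ε hε => by
    have hlim : Tendsto (fun k : ℕ => v x / k + (v (x + h) - v x)) atTop
        (𝓝 (0 + (v (x + h) - v x))) := (tendsto_const_div_atTop_nhds_zero_nat _).add_const _
    rw [← zero_add (v (x + h) - v x)]
    refine ge_of_tendsto hlim ?_
    filter_upwards [hescape.eventually (hlow ε hε), eventually_ge_atTop 1] with k hk hk1
    have hk0 : (1 : ℝ) ≤ k := by exact_mod_cast hk1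
    have hnorm : ‖x + k • h‖ ≤ k * (‖x‖ + ‖h‖) := by
      have := norm_nsmul_le (n := k) (a := h)
      nlinarith [norm_add_le x (k • h), norm_nonneg x]
    rw [apply_add_nsmul_of_fwdDiff_two_eq_zero hv] at hk
    rw [div_add' _ _ _ (by positivity), le_div_iff₀ (by positivity)]
    nlinarith
  have hlim : Tendsto (fun ε : ℝ => -ε * (‖x‖ + ‖h‖)) (𝓝[>] 0) (𝓝 0) := by
    refine Tendsto.mono_left ?_ nhdsWithin_le_nhds
    exact Continuous.tendsto' (by fun_prop) _ _ (by simp)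
  exact sub_nonneg.1 (le_of_tendsto hlim (eventually_mem_nhdsWithin.mono hslope))

lemma eventually_cobounded_le_of_ae_eq {V : Type*} [NormedAddCommGroup V] [MeasurableSpace V]
    [OpensMeasurableSpace V] {μ : Measure V} [μ.IsOpenPosMeasure] {U v g : V → ℝ}
    (hv : Continuous v) (hg : Continuous g) (hUv : U =ᵐ[μ] v)
    (hU : ∀ᶠ x in Bornology.cobounded V, g x ≤ U x) :
    ∀ᶠ x in Bornology.cobounded V, g x ≤ v x := by
  obtain ⟨R, -, hR⟩ := hasBasis_cobounded_norm.eventually_iff.1 hU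
  have hopen : IsOpen {x : V | R < ‖x‖} := isOpen_lt continuous_const continuous_norm
  have hmin : EqOn (fun x => min (g x) (v x)) g {x : V | R < ‖x‖} := by
    refine Measure.eqOn_open_of_ae_eq (μ := μ) ?_ hopen (hg.min hv).continuousOn hg.continuousOn
    refine (ae_restrict_iff' hopen.measurableSet).2 (hUv.mono fun x hx hxR => ?_)
    exact min_eq_left (hx ▸ hR (mem_ofPred.2 (le_of_lt hxR)))
  filter_upwards [hasBasis_cobounded_norm.mem_of_mem (i := R + 1) trivial] with x hx
  exact min_eq_left_iff.1 (hmin ((lt_add_one R).trans_le hx))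

/-! ### Inverting symbols away from the origin -/

lemma exists_contDiff_mul_eq {V : Type*} [NormedAddCommGroup V] [NormedSpace ℝ V] {G a : V → ℂ}
    (hG : ContDiff ℝ ∞ G) (hGc : HasCompactSupport G)
    (ha : ∀ ξ ∈ tsupport G, ContDiffAt ℝ ∞ a ξ ∧ a ξ ≠ 0) :
    ∃ F : V → ℂ, ContDiff ℝ ∞ F ∧ HasCompactSupport F ∧ tsupport F ⊆ tsupport G ∧ a * F = G := by
  have hsupp : Function.support (G / a) ⊆ Function.support G :=
    (Function.support_div _ _).trans_subset inter_subset_left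
  refine ⟨G / a, contDiff_iff_contDiffAt.2 fun ξ => ?_, hGc.mono hsupp, closure_mono hsupp,
    funext fun ξ => ?_⟩
  · by_cases hξ : ξ ∈ tsupport G
    · rw [div_eq_mul_inv]
      exact hG.contDiffAt.mul ((ha ξ hξ).1.inv (ha ξ hξ).2)
    · refine contDiffAt_const (c := 0) |>.congr_of_eventuallyEq ?_
      filter_upwards [notMem_tsupport_iff_eventuallyEq.1 hξ] with η hη
      simp [hη]
  · refine mul_div_cancel_of_imp' fun hξ => by_contra fun hGξ => ?_
    exact (ha ξ (subset_tsupport G hGξ)).2 hξ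

lemma exists_schwartz_eq_fourierInv {V : Type*} [NormedAddCommGroup V] [InnerProductSpace ℝ V]
    [FiniteDimensional ℝ V] [MeasurableSpace V] [BorelSpace V] {G : V → ℂ}
    (hG : ContDiff ℝ ∞ G) (hGc : HasCompactSupport G) : ∃ f : 𝓢(V, ℂ), ⇑f = 𝓕⁻ G :=
  ⟨𝓕⁻ (hGc.toSchwartzMap hG), SchwartzMap.fourierInv_coe _⟩

namespace LevyOperator

section Elliptic

variable {V : Type*} [NormedAddCommGroup V] [InnerProductSpace ℝ V] [FiniteDimensional ℝ V]
  [MeasurableSpace V] [BorelSpace V] {L : LevyOperator V}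

lemma op_fourierInv_of_hasCompactSupport {G : V → ℂ} (hG : ContDiff ℝ ∞ G)
    (hGc : HasCompactSupport G) (x : V) :
    L.op (𝓕⁻ G) x = 𝓕⁻ (fun ξ => L.symbol ξ * G ξ) x := L.op_fourierInv (hGc.toSchwartzMap hG) x

lemma IsElliptic.exists_op_fourierInv_eq (hL : L.IsElliptic) {G : V → ℂ} (hG : ContDiff ℝ ∞ G)
    (hGc : HasCompactSupport G) (hG0 : (0 : V) ∉ tsupport G) :
    ∃ F : V → ℂ, ContDiff ℝ ∞ F ∧ HasCompactSupport F ∧ (0 : V) ∉ tsupport F ∧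
      L.op (𝓕⁻ F) = 𝓕⁻ G := by
  have hsupp : ∀ ξ ∈ tsupport G, ξ ≠ 0 := fun ξ hξ h => hG0 (h ▸ hξ)
  obtain ⟨F, hF, hFc, hFG, rfl⟩ := exists_contDiff_mul_eq (a := L.symbol) hG hGc fun ξ hξ =>
    ⟨hL.contDiffAt_symbol ξ (hsupp ξ hξ), hL.symbol_ne_zero (hsupp ξ hξ)⟩
  exact ⟨F, hF, hFc, fun h => hG0 (hFG h),
    funext fun x => op_fourierInv_of_hasCompactSupport hF hFc x⟩

end Elliptic

end LevyOperator

/-! ### Operators and functions on a product -/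

namespace LevyOperator

section Prod

variable {E T F : Type*} [NormedAddCommGroup E] [InnerProductSpace ℝ E] [FiniteDimensional ℝ E]
  [MeasurableSpace E] [BorelSpace E] [NormedAddCommGroup T] [InnerProductSpace ℝ T]
  [FiniteDimensional ℝ T] [MeasurableSpace T] [BorelSpace T] [NormedAddCommGroup F]
  [NormedSpace ℝ F]

variable (T) in
/-- The operator `L` acting on the first variable of functions on the Euclidean product. -/
noncomputable def onFst (L : LevyOperator E) : LevyOperator (WithLp 2 (E × T)) :=
  L.map ((WithLp.prodContinuousLinearEquiv 2 ℝ E T).symm ∘L .inl ℝ E T)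

variable (E) in
/-- The operator `M` acting on the second variable of functions on the Euclidean product. -/
noncomputable def onSnd (M : LevyOperator T) : LevyOperator (WithLp 2 (E × T)) :=
  M.map ((WithLp.prodContinuousLinearEquiv 2 ℝ E T).symm ∘L .inr ℝ E T)

lemma op_onFst (L : LevyOperator E) {f : WithLp 2 (E × T) → F} (hf : Continuous f) (x : E)
    (t : T) : (L.onFst T).op f (.toLp 2 (x, t)) = L.op (fun y => f (.toLp 2 (y, t))) x := by
  simpa [onFst, ← WithLp.toLp_add] using L.op_map hf
    ((WithLp.prodContinuousLinearEquiv 2 ℝ E T).symm ∘L .inl ℝ E T) (.toLp 2 (0, t)) x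

lemma op_onSnd (M : LevyOperator T) {f : WithLp 2 (E × T) → F} (hf : Continuous f) (x : E)
    (t : T) : (M.onSnd E).op f (.toLp 2 (x, t)) = M.op (fun τ => f (.toLp 2 (x, τ))) t := by
  simpa [onSnd, ← WithLp.toLp_add] using M.op_map hf
    ((WithLp.prodContinuousLinearEquiv 2 ℝ E T).symm ∘L .inr ℝ E T) (.toLp 2 (x, 0)) t

lemma symbol_onFst (L : LevyOperator E) (ζ : WithLp 2 (E × T)) :
    (L.onFst T).symbol ζ = L.symbol ζ.fst := by
  rw [onFst, symbol_map]
  congr 1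
  exact ext_inner_right ℝ fun x => by simp [ContinuousLinearMap.adjoint_inner_left]

lemma symbol_onSnd (M : LevyOperator T) (ζ : WithLp 2 (E × T)) :
    (M.onSnd E).symbol ζ = M.symbol ζ.snd := by
  rw [onSnd, symbol_map]
  congr 1
  exact ext_inner_right ℝ fun t => by simp [ContinuousLinearMap.adjoint_inner_left]

lemma op_onFst_add_op_onSnd_fourierInv (L : LevyOperator E) (M : LevyOperator T)
    (G : 𝓢(WithLp 2 (E × T), ℂ)) (z : WithLp 2 (E × T)) :
    (L.onFst T).op (𝓕⁻ (G : WithLp 2 (E × T) → ℂ)) z +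
        (M.onSnd E).op (𝓕⁻ (G : WithLp 2 (E × T) → ℂ)) z =
      𝓕⁻ (fun ζ : WithLp 2 (E × T) => (L.symbol ζ.fst + M.symbol ζ.snd) * G ζ) z := by
  simp only [op_fourierInv, fourierInv_eq_integral_planeWave]
  rw [← integral_add (integrable_planeWave_mul (integrable_symbol_mul _ G) z)
    (integrable_planeWave_mul (integrable_symbol_mul _ G) z)]
  simp only [symbol_onFst, symbol_onSnd, ← mul_add, ← add_mul]

lemma op_mul_const (L : LevyOperator E) (f : 𝓢(E, ℂ)) (c : ℂ) (x : E) :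
    L.op (fun y => f y * c) x = L.op f x * c :=
  L.op_clm_comp ((ContinuousLinearMap.mul ℝ ℂ).flip c) f x

end Prod

end LevyOperator

section Tensor

variable {E T : Type*} [NormedAddCommGroup E] [NormedAddCommGroup T] {g : E → ℂ} {h : T → ℂ}

/-- The tensor product of two functions, on the Euclidean product. -/
def tensor (g : E → ℂ) (h : T → ℂ) (ζ : WithLp 2 (E × T)) : ℂ := g ζ.fst * h ζ.snd

variable [InnerProductSpace ℝ E] [InnerProductSpace ℝ T]

lemma contDiff_tensor (hg : ContDiff ℝ ∞ g) (hh : ContDiff ℝ ∞ h) :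
    ContDiff ℝ ∞ (tensor g h) :=
  (hg.comp (WithLp.fstL 2 ℝ E T).contDiff).mul (hh.comp (WithLp.sndL 2 ℝ E T).contDiff)

lemma tsupport_tensor_subset :
    tsupport (tensor g h) ⊆ {ζ | ζ.fst ∈ tsupport g ∧ ζ.snd ∈ tsupport h} := by
  refine closure_minimal (fun ζ hζ => ?_) (.inter ?_ ?_)
  · exact ⟨subset_tsupport g (left_ne_zero_of_mul hζ), subset_tsupport h (right_ne_zero_of_mul hζ)⟩
  · exact (isClosed_tsupport g).preimage (WithLp.fstL 2 ℝ E T).continuous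
  · exact (isClosed_tsupport h).preimage (WithLp.sndL 2 ℝ E T).continuous

lemma hasCompactSupport_tensor (hg : HasCompactSupport g) (hh : HasCompactSupport h) :
    HasCompactSupport (tensor g h) := by
  have hcompact := (hg.isCompact.prod hh.isCompact).image
    (WithLp.prodContinuousLinearEquiv 2 ℝ E T).symm.continuous
  refine hcompact.of_isClosed_subset (isClosed_tsupport _) fun ζ hζ => ?_
  exact ⟨ζ.ofLp, tsupport_tensor_subset hζ, rfl⟩

variable [FiniteDimensional ℝ E] [MeasurableSpace E] [BorelSpace E] [FiniteDimensional ℝ T]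
  [MeasurableSpace T] [BorelSpace T]

lemma fourierInv_tensor (g : E → ℂ) (h : T → ℂ) (x : E) (t : T) :
    𝓕⁻ (tensor g h) (.toLp 2 (x, t)) = 𝓕⁻ g x * 𝓕⁻ h t := by
  simp only [fourierInv_eq_integral_planeWave]
  rw [← integral_prod_mul, ← (WithLp.volume_preserving_toLp E T).integral_comp
    (MeasurableEquiv.toLp 2 (E × T)).measurableEmbedding]
  congr 1 with p
  have hwave : planeWave (WithLp.toLp 2 p) (WithLp.toLp 2 (x, t)) =
      planeWave p.1 x * planeWave p.2 t := by
    simp [planeWave_apply, WithLp.prod_inner_apply, AddChar.map_add_eq_mul]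
  rw [hwave, tensor]
  exact mul_mul_mul_comm _ _ _ _

end Tensor

/-! ### Dual solutions -/

section DualSolution

variable {E T : Type*} [NormedAddCommGroup E] [InnerProductSpace ℝ E] [FiniteDimensional ℝ E]
  [MeasurableSpace E] [BorelSpace E] {u : E × T → ℝ} {N₁ N₂ : ℝ}

/-- The function `t ↦ ∫ u(x,t) f(x) dx` obtained by testing `u` in the first variable. -/
noncomputable def slicePairing (u : E × T → ℝ) (f : E → ℂ) (t : T) : ℂ := ∫ x, (u (x, t) : ℂ) * f x

lemma slicePairing_of_ae_eq_const {t : T} {c : ℝ} (hc : ∀ᵐ x, u (x, t) = c) (f : E → ℂ) :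
    slicePairing u f t = c * ∫ x, f x := by
  rw [slicePairing, ← integral_const_mul]
  exact integral_congr_ae (hc.mono fun x hx => by simp only [hx])

variable [NormedAddCommGroup T] [InnerProductSpace ℝ T] [FiniteDimensional ℝ T]
  [MeasurableSpace T] [BorelSpace T]

/-- Integrability against the product of the weights `(1 + ‖x‖) ^ (-N₁)` and
`(1 + ‖t‖) ^ (-N₂)`. -/
def ProdWeightedIntegrable (N₁ N₂ : ℝ) (u : E × T → ℝ) : Prop :=
  Integrable fun p : E × T => (1 + ‖p.1‖) ^ (-N₁) * (1 + ‖p.2‖) ^ (-N₂) * u p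

lemma ProdWeightedIntegrable.ae_weightedIntegrable_slice (hu : ProdWeightedIntegrable N₁ N₂ u) :
    ∀ᵐ t, WeightedIntegrable N₁ fun x => (u (x, t) : ℂ) := by
  filter_upwards [Integrable.prod_left_ae hu] with t ht
  have hcancel : ∀ x, ((1 + ‖t‖) ^ N₂ * ((1 + ‖x‖) ^ (-N₁) * (1 + ‖t‖) ^ (-N₂) * u (x, t)) : ℝ) =
      (1 + ‖x‖) ^ (-N₁) * u (x, t) := fun x => by
    rw [Real.rpow_neg (by positivity : 0 ≤ 1 + ‖t‖)]
    field_simp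
  simpa [hcancel, WeightedIntegrable] using (ht.const_mul ((1 + ‖t‖) ^ N₂)).ofReal (𝕜 := ℂ)

lemma ProdWeightedIntegrable.weightedIntegrable_slicePairing
    (hu : ProdWeightedIntegrable N₁ N₂ u) (f : 𝓢(E, ℂ)) :
    WeightedIntegrable N₂ (slicePairing u f) := by
  obtain ⟨C, -, hf⟩ := exists_norm_schwartz_le f N₁
  have hint : Integrable fun p : E × T =>
      ((1 + ‖p.1‖) ^ (-N₁) * (1 + ‖p.2‖) ^ (-N₂) * u p : ℝ) * ((1 + ‖p.1‖) ^ N₁ • f p.1) := by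
    refine Integrable.mul_bdd (c := C) hu.ofReal ?_ (.of_forall fun p => ?_)
    · exact (((continuous_one_add_norm_rpow N₁).smul f.continuous).comp
        continuous_fst).aestronglyMeasurable
    · rw [norm_smul, Real.norm_of_nonneg (by positivity), mul_comm]
      refine (mul_le_mul_of_nonneg_right (hf p.1) (by positivity)).trans_eq ?_
      rw [mul_assoc, ← Real.rpow_add (by positivity), neg_add_cancel, Real.rpow_zero, mul_one]
  refine hint.integral_prod_right.congr (.of_forall fun t => ?_)
  dsimp only [slicePairing]
  rw [← integral_smul]
  congr 1 with x
  rw [Real.rpow_neg (by positivity : 0 ≤ 1 + ‖x‖)]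
  simp only [Complex.real_smul, Complex.ofReal_mul, Complex.ofReal_inv]
  have hne : (((1 + ‖x‖) ^ N₁ : ℝ) : ℂ) ≠ 0 := Complex.ofReal_ne_zero.2 (by positivity)
  field_simp

/-- `u` is annihilated, in the sense of distributions, by the transpose of `L + M`, where `L` and
`M` act on the first and the second variable of the test functions. -/
def IsDualSolution (L : LevyOperator E) (M : LevyOperator T) (u : E × T → ℝ) : Prop :=
  ∀ φ : 𝓢(WithLp 2 (E × T), ℝ), ∫ t, ∫ x, u (x, t) *
    ((L.onFst T).op φ (.toLp 2 (x, t)) + (M.onSnd E).op φ (.toLp 2 (x, t))) = 0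

namespace IsDualSolution

variable {L : LevyOperator E} {M : LevyOperator T}

lemma integral_integral_eq_zero (hsol : IsDualSolution L M u) (Φ : 𝓢(WithLp 2 (E × T), ℂ))
    {P : E → T → ℂ} (hP : ∀ x t, (L.onFst T).op Φ (.toLp 2 (x, t)) +
      (M.onSnd E).op Φ (.toLp 2 (x, t)) = P x t)
    (hslice : ∀ᵐ t, Integrable fun x => u (x, t) * P x t)
    (hint : Integrable fun t => ∫ x, u (x, t) * P x t) : ∫ t, ∫ x, u (x, t) * P x t = 0 := by
  have hpart : ∀ B : ℂ →L[ℝ] ℝ, B (∫ t, ∫ x, u (x, t) * P x t) = 0 := fun B => by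
    rw [← B.integral_comp_comm hint, ← hsol (Φ.postcompCLM B)]
    refine integral_congr_ae (hslice.mono fun t ht => ?_)
    refine (B.integral_comp_comm ht).symm.trans ?_
    congr 1 with x
    rw [← Complex.real_smul, map_smul, smul_eq_mul, ← hP, map_add, ← LevyOperator.op_clm_comp,
      ← LevyOperator.op_clm_comp]
    rfl
  exact Complex.ext (hpart Complex.reCLM) (hpart Complex.imCLM)

variable {g : E → ℂ} {h : T → ℂ}

lemma integral_slicePairing_mul_fourierInv_eq_zero (hL : L.IsElliptic) (hM : M.IsElliptic)
    (hN₁ : 0 ≤ N₁) (hN₂ : 0 ≤ N₂) (hu : ProdWeightedIntegrable N₁ N₂ u)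
    (hsol : IsDualSolution L M u) (hg : ContDiff ℝ ∞ g) (hgc : HasCompactSupport g)
    (hg0 : (0 : E) ∉ tsupport g) (hh : ContDiff ℝ ∞ h) (hhc : HasCompactSupport h)
    (hh0 : (0 : T) ∉ tsupport h) : ∫ t, slicePairing u (𝓕⁻ g) t * 𝓕⁻ h t = 0 := by
  have hinv : ∀ ζ ∈ tsupport (tensor g h),
      ContDiffAt ℝ ∞ (fun ζ : WithLp 2 (E × T) => L.symbol ζ.fst + M.symbol ζ.snd) ζ ∧
        L.symbol ζ.fst + M.symbol ζ.snd ≠ 0 := fun ζ hζ => by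
    have hfst : ζ.fst ≠ 0 := fun h0 => hg0 (h0 ▸ (tsupport_tensor_subset hζ).1)
    have hsnd : ζ.snd ≠ 0 := fun h0 => hh0 (h0 ▸ (tsupport_tensor_subset hζ).2)
    refine ⟨((hL.contDiffAt_symbol _ hfst).comp ζ (WithLp.fstL 2 ℝ E T).contDiff.contDiffAt).add
      ((hM.contDiffAt_symbol _ hsnd).comp ζ (WithLp.sndL 2 ℝ E T).contDiff.contDiffAt),
      fun h0 => ?_⟩
    have hre := congrArg Complex.re h0
    rw [Complex.add_re, Complex.zero_re] at hre
    exact (add_neg (hL.re_symbol_neg _ hfst) (hM.re_symbol_neg _ hsnd)).ne hre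
  obtain ⟨F, hF, hFc, -, hFG⟩ :=
    exists_contDiff_mul_eq (contDiff_tensor hg hh) (hasCompactSupport_tensor hgc hhc) hinv
  obtain ⟨Φ, hΦ⟩ := exists_schwartz_eq_fourierInv hF hFc
  obtain ⟨f, hf⟩ := exists_schwartz_eq_fourierInv hg hgc
  obtain ⟨k, hk⟩ := exists_schwartz_eq_fourierInv hh hhc
  have hP : ∀ x t, (L.onFst T).op Φ (.toLp 2 (x, t)) + (M.onSnd E).op Φ (.toLp 2 (x, t)) =
      f x * k t := fun x t => by
    rw [hΦ, hf, hk, ← fourierInv_tensor, ← hFG]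
    exact LevyOperator.op_onFst_add_op_onSnd_fourierInv L M (hFc.toSchwartzMap hF) _
  have hpair : ∀ t, ∫ x, u (x, t) * (f x * k t) = slicePairing u f t * k t := fun t => by
    simp only [slicePairing, ← mul_assoc, integral_mul_const]
  simp only [← hf, ← hk, ← hpair]
  exact hsol.integral_integral_eq_zero Φ hP
    (hu.ae_weightedIntegrable_slice.mono fun t ht => by
      simpa only [mul_assoc, sub_zero] using
        (ht.integrable_mul_schwartz_sub hN₁ f 0).mul_const (k t))
    (by simpa only [hpair, sub_zero] using
      (hu.weightedIntegrable_slicePairing f).integrable_mul_schwartz_sub hN₂ k 0)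

lemma integral_slicePairing_mul_op_add_eq_zero (hsol : IsDualSolution L M u)
    (hg : ContDiff ℝ ∞ g) (hgc : HasCompactSupport g) (hh : ContDiff ℝ ∞ h)
    (hhc : HasCompactSupport h)
    (hslice : ∀ᵐ t, Integrable (fun x => u (x, t) * 𝓕⁻ g x) ∧
      Integrable fun x => u (x, t) * L.op (𝓕⁻ g) x)
    (hint : Integrable fun t => slicePairing u (𝓕⁻ g) t * M.op (𝓕⁻ h) t +
      slicePairing u (L.op (𝓕⁻ g)) t * 𝓕⁻ h t) :
    ∫ t, (slicePairing u (𝓕⁻ g) t * M.op (𝓕⁻ h) t +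
      slicePairing u (L.op (𝓕⁻ g)) t * 𝓕⁻ h t) = 0 := by
  obtain ⟨Φ, hΦ⟩ := exists_schwartz_eq_fourierInv (contDiff_tensor hg hh)
    (hasCompactSupport_tensor hgc hhc)
  obtain ⟨f, hf⟩ := exists_schwartz_eq_fourierInv hg hgc
  obtain ⟨k, hk⟩ := exists_schwartz_eq_fourierInv hh hhc
  have hP : ∀ x t, (L.onFst T).op Φ (.toLp 2 (x, t)) + (M.onSnd E).op Φ (.toLp 2 (x, t)) =
      f x * M.op k t + L.op f x * k t := fun x t => by
    rw [LevyOperator.op_onFst L Φ.continuous, LevyOperator.op_onSnd M Φ.continuous, hΦ, add_comm]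
    simp only [fourierInv_tensor, ← hf, ← hk, mul_comm (f x), LevyOperator.op_mul_const]
  rw [← hf] at hslice hint ⊢
  rw [← hk] at hint ⊢
  have hsliceP : ∀ᵐ t, Integrable (fun x => u (x, t) * (f x * M.op k t + L.op f x * k t)) ∧
      ∫ x, u (x, t) * (f x * M.op k t + L.op f x * k t) =
        slicePairing u f t * M.op k t + slicePairing u (L.op f) t * k t := by
    filter_upwards [hslice] with t ht
    simp only [mul_add, ← mul_assoc]
    refine ⟨(ht.1.mul_const _).add (ht.2.mul_const _), ?_⟩
    rw [integral_add (ht.1.mul_const _) (ht.2.mul_const _), integral_mul_const, integral_mul_const]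
    rfl
  have hpair : (fun t => ∫ x, u (x, t) * (f x * M.op k t + L.op f x * k t)) =ᵐ[volume]
      fun t => slicePairing u f t * M.op k t + slicePairing u (L.op f) t * k t :=
    hsliceP.mono fun t => And.right
  rw [← integral_congr_ae hpair]
  exact hsol.integral_integral_eq_zero Φ hP (hsliceP.mono fun t => And.left)
    (hint.congr hpair.symm)

lemma exists_ae_slicePairing_eq_const (hL : L.IsElliptic) (hM : M.IsElliptic) (hN₁ : 0 ≤ N₁)
    (hN₂ : 0 ≤ N₂) (hN₂d : N₂ < Module.finrank ℝ T + 1) (hu : ProdWeightedIntegrable N₁ N₂ u)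
    (hsol : IsDualSolution L M u) (hg : ContDiff ℝ ∞ g) (hgc : HasCompactSupport g)
    (hg0 : (0 : E) ∉ tsupport g) : ∃ c, ∀ᵐ t, slicePairing u (𝓕⁻ g) t = c := by
  obtain ⟨f, hf⟩ := exists_schwartz_eq_fourierInv hg hgc
  have hweight := hu.weightedIntegrable_slicePairing f
  rw [hf] at hweight
  exact IsLowPassInvariant.exists_ae_eq_const hN₂ hN₂d hweight
    (isLowPassInvariant_of_integral_mul_fourierInv_eq_zero hN₂ hweight fun h hh hhc hh0 =>
      hsol.integral_slicePairing_mul_fourierInv_eq_zero hL hM hN₁ hN₂ hu hg hgc hg0 hh hhc hh0)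

lemma ae_slicePairing_eq_zero (hL : L.IsElliptic) (hM : M.IsElliptic) (hN₁ : 0 ≤ N₁)
    (hN₂ : 0 ≤ N₂) (hN₂d : N₂ < Module.finrank ℝ T + 1) (hu : ProdWeightedIntegrable N₁ N₂ u)
    (hsol : IsDualSolution L M u) (hg : ContDiff ℝ ∞ g) (hgc : HasCompactSupport g)
    (hg0 : (0 : E) ∉ tsupport g) : ∀ᵐ t, slicePairing u (𝓕⁻ g) t = 0 := by
  obtain ⟨F, hF, hFc, hF0, hFg⟩ := hL.exists_op_fourierInv_eq hg hgc hg0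
  obtain ⟨c, hc⟩ :=
    hsol.exists_ae_slicePairing_eq_const hL hM hN₁ hN₂ hN₂d hu hg hgc hg0
  obtain ⟨b, hb⟩ :=
    hsol.exists_ae_slicePairing_eq_const hL hM hN₁ hN₂ hN₂d hu hF hFc hF0
  obtain ⟨f, hf⟩ := exists_schwartz_eq_fourierInv hg hgc
  obtain ⟨k, hk⟩ := exists_schwartz_eq_fourierInv hF hFc
  set ρ : 𝓢(T, ℂ) := lowPass 0
  have hρ : 𝓕⁻ (modulatedCutoff 0 (0 : T)) = ρ := funext fun t => (lowPass_apply 0 t).symm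
  have hconst : (fun t => slicePairing u (𝓕⁻ F) t * M.op ρ t + slicePairing u (𝓕⁻ g) t * ρ t)
      =ᵐ[volume] fun t => b * M.op ρ t + c * ρ t := by
    filter_upwards [hb, hc] with t hbt hct
    rw [hbt, hct]
  have hint := ((M.integrable_op ρ volume).const_mul b).add (ρ.integrable.const_mul c)
  have hzero := hsol.integral_slicePairing_mul_op_add_eq_zero hF hFc
    (contDiff_modulatedCutoff 0 (0 : T)) (hasCompactSupport_modulatedCutoff 0 0)
    (hu.ae_weightedIntegrable_slice.mono fun t ht => by
      rw [hFg, ← hf, ← hk]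
      exact ⟨by simpa only [sub_zero] using ht.integrable_mul_schwartz_sub hN₁ k 0,
        by simpa only [sub_zero] using ht.integrable_mul_schwartz_sub hN₁ f 0⟩)
    (by rw [hFg, hρ]; exact hint.congr hconst.symm)
  rw [hFg, hρ, integral_congr_ae hconst, integral_add ((M.integrable_op ρ volume).const_mul b)
    (ρ.integrable.const_mul c), integral_const_mul, integral_const_mul, M.integral_op_eq_zero,
    integral_lowPass_zero, mul_zero, zero_add, mul_one] at hzero
  exact hzero ▸ hc

open TopologicalSpace in
lemma ae_isLowPassInvariant_slice (hL : L.IsElliptic) (hM : M.IsElliptic) (hN₁ : 0 ≤ N₁)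
    (hN₂ : 0 ≤ N₂) (hN₂d : N₂ < Module.finrank ℝ T + 1) (hu : ProdWeightedIntegrable N₁ N₂ u)
    (hsol : IsDualSolution L M u) : ∀ᵐ t, IsLowPassInvariant fun x => (u (x, t) : ℂ) := by
  have hcutoff : ∀ᵐ t, ∀ (k : ℤ) (i : ℕ), slicePairing u
      (𝓕⁻ (modulatedCutoff k (denseSeq E i) - modulatedCutoff 0 (denseSeq E i))) t = 0 :=
    ae_all_iff.2 fun k => ae_all_iff.2 fun i => hsol.ae_slicePairing_eq_zero hL hM hN₁ hN₂ hN₂d hu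
      ((contDiff_modulatedCutoff _ _).sub (contDiff_modulatedCutoff _ _))
      ((hasCompactSupport_modulatedCutoff _ _).sub (hasCompactSupport_modulatedCutoff _ _))
      (zero_notMem_tsupport_modulatedCutoff_sub _ _ _)
  filter_upwards [hcutoff, hu.ae_weightedIntegrable_slice] with t ht hut
  exact isLowPassInvariant_of_denseRange hN₁ hut (denseRange_denseSeq E) ht

lemma integral_slicePairing_lowPass_mul_fourierInv_eq_zero (hM : M.IsElliptic) (hN₂ : 0 ≤ N₂)
    (hu : ProdWeightedIntegrable N₁ N₂ u) (hsol : IsDualSolution L M u)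
    (hslice : ∀ᵐ t, ∃ c : ℝ, ∀ᵐ x, u (x, t) = c) (hh : ContDiff ℝ ∞ h) (hhc : HasCompactSupport h)
    (hh0 : (0 : T) ∉ tsupport h) :
    ∫ t, slicePairing u (lowPass 0 : 𝓢(E, ℂ)) t * 𝓕⁻ h t = 0 := by
  obtain ⟨F, hF, hFc, -, hFh⟩ := hM.exists_op_fourierInv_eq hh hhc hh0
  obtain ⟨k, hk⟩ := exists_schwartz_eq_fourierInv hh hhc
  set ρ : 𝓢(E, ℂ) := lowPass 0
  have hρ : 𝓕⁻ (modulatedCutoff 0 (0 : E)) = ρ := funext fun x => (lowPass_apply 0 x).symm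
  have hintegrand : (fun t => slicePairing u ρ t * k t + slicePairing u (L.op ρ) t * 𝓕⁻ F t)
      =ᵐ[volume] fun t => slicePairing u ρ t * k t := by
    filter_upwards [hslice] with t ⟨c, hc⟩
    rw [slicePairing_of_ae_eq_const hc (L.op ρ), L.integral_op_eq_zero, mul_zero, zero_mul,
      add_zero]
  have hint : Integrable fun t => slicePairing u ρ t * k t := by
    simpa only [sub_zero] using
      (hu.weightedIntegrable_slicePairing ρ).integrable_mul_schwartz_sub hN₂ k 0
  rw [← hk, ← integral_congr_ae hintegrand]
  have hzero := hsol.integral_slicePairing_mul_op_add_eq_zero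
    (contDiff_modulatedCutoff 0 (0 : E)) (hasCompactSupport_modulatedCutoff 0 0) hF hFc
    (hslice.mono fun t ⟨c, hc⟩ => by
      rw [hρ]
      exact ⟨(ρ.integrable.const_mul (c : ℂ)).congr (hc.mono fun x hx => by simp only [hx]),
        ((L.integrable_op ρ volume).const_mul (c : ℂ)).congr
          (hc.mono fun x hx => by simp only [hx])⟩)
    (by rw [hρ, hFh, ← hk]; exact hint.congr hintegrand.symm)
  rwa [hρ, hFh, ← hk] at hzero

lemma exists_ae_eq_const_of_ae_slice (hM : M.IsElliptic)
    (hN₂ : 0 ≤ N₂) (hN₂d : N₂ < Module.finrank ℝ T + 1) (hu : ProdWeightedIntegrable N₁ N₂ u)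
    (hsol : IsDualSolution L M u) (hslice : ∀ᵐ t, ∃ c : ℝ, ∀ᵐ x, u (x, t) = c) :
    ∃ c : ℝ, ∀ᵐ t, ∀ᵐ x, u (x, t) = c := by
  have hpair := hu.weightedIntegrable_slicePairing (lowPass 0)
  obtain ⟨c, hc⟩ := IsLowPassInvariant.exists_ae_eq_const hN₂ hN₂d hpair
    (isLowPassInvariant_of_integral_mul_fourierInv_eq_zero hN₂ hpair fun h hh hhc hh0 =>
      hsol.integral_slicePairing_lowPass_mul_fourierInv_eq_zero hM hN₂ hu hslice hh hhc hh0)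
  refine ⟨c.re, ?_⟩
  filter_upwards [hslice, hc] with t ⟨b, hb⟩ htc
  rw [slicePairing_of_ae_eq_const hb, integral_lowPass_zero, mul_one] at htc
  rwa [← htc, Complex.ofReal_re]

end IsDualSolution

end DualSolution

/-! ### The Liouville theorem for dual solutions -/

lemma IsLowPassInvariant.exists_ae_eq_const_of_lower_bound {V : Type*} [NormedAddCommGroup V]
    [InnerProductSpace ℝ V] [FiniteDimensional ℝ V] [MeasurableSpace V] [BorelSpace V] {U : V → ℝ}
    {N : ℝ} (hN : 0 ≤ N) (hNd : N < Module.finrank ℝ V + 2)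
    (hU : WeightedIntegrable N fun x => (U x : ℂ)) (hinv : IsLowPassInvariant fun x => (U x : ℂ))
    (hlow : ∀ ε > 0, ∀ᶠ x in Bornology.cobounded V, -ε * ‖x‖ ≤ U x) : ∃ c, ∀ᵐ x, U x = c := by
  obtain ⟨v, hv, hUv, hv2⟩ := exists_continuous_ae_eq (m := 2) hN hNd hU hinv
  have hre : U =ᵐ[volume] fun x => (v x).re := hUv.mono fun x hx => by
    dsimp only at hx ⊢
    rw [← hx, Complex.ofReal_re]
  have hre2 : ∀ h x, Δ_[h] ^[2] (fun x => (v x).re) x = 0 := fun h x => by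
    simpa only [fwdDiff_iter_eq_sum_shift, map_sum, map_zsmul, map_zero, Complex.reCLM_apply] using
      congrArg Complex.reCLM (hv2 h x)
  refine ⟨(v 0).re, hre.mono fun x hx => hx.trans ?_⟩
  exact eq_of_fwdDiff_two_eq_zero_of_lower_bound hre2 (fun ε hε =>
    eventually_cobounded_le_of_ae_eq (Complex.continuous_re.comp hv) (by fun_prop) hre (hlow ε hε))
    x 0

lemma ae_prod_eq_const_of_ae_ae {X Y Z : Type*} [MeasurableSpace X] [MeasurableSpace Y]
    [TopologicalSpace Z] [TopologicalSpace.MetrizableSpace Z]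
    {μ : Measure X} {ν : Measure Y} [SFinite μ] [SFinite ν] {u : X × Y → Z}
    (hu : AEStronglyMeasurable u (μ.prod ν)) {c : Z} (h : ∀ᵐ y ∂ν, ∀ᵐ x ∂μ, u (x, y) = c) :
    ∀ᵐ p ∂(μ.prod ν), u p = c := by
  have hmk : ∀ᵐ y ∂ν, ∀ᵐ x ∂μ, u (x, y) = hu.mk u (x, y) := Measure.ae_ae_of_ae_prod
    ((Measure.measurePreserving_swap (μ := ν) (ν := μ)).quasiMeasurePreserving.ae hu.ae_eq_mk)
  have hmeas : MeasurableSet {p : X × Y | hu.mk u p = c} :=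
    hu.stronglyMeasurable_mk.measurableSet_eq_fun stronglyMeasurable_const
  have hconst : ∀ᵐ p ∂(μ.prod ν), hu.mk u p = c := by
    rw [Measure.ae_prod_iff_ae_ae hmeas, Measure.ae_ae_comm hmeas]
    filter_upwards [h, hmk] with y hy hmky
    filter_upwards [hy, hmky] with x hx hmkx
    rw [← hmkx, hx]
  filter_upwards [hconst, hu.ae_eq_mk] with p hp hmkp
  rw [hmkp, hp]

section DualSolution

variable {E T : Type*} [NormedAddCommGroup E] [InnerProductSpace ℝ E] [FiniteDimensional ℝ E]
  [MeasurableSpace E] [BorelSpace E] [NormedAddCommGroup T] [InnerProductSpace ℝ T]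
  [FiniteDimensional ℝ T] [MeasurableSpace T] [BorelSpace T] {u : E × T → ℝ} {N₁ N₂ : ℝ}

lemma ProdWeightedIntegrable.aestronglyMeasurable (hu : ProdWeightedIntegrable N₁ N₂ u) :
    AEStronglyMeasurable u := by
  have hweight : Continuous fun p : E × T => (1 + ‖p.1‖) ^ N₁ * (1 + ‖p.2‖) ^ N₂ :=
    ((continuous_one_add_norm_rpow N₁).comp continuous_fst).mul
      ((continuous_one_add_norm_rpow N₂).comp continuous_snd)
  refine (hweight.aestronglyMeasurable.mul hu.1).congr (.of_forall fun p => ?_)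
  dsimp only [Pi.mul_apply]
  rw [Real.rpow_neg (by positivity), Real.rpow_neg (by positivity)]
  field_simp

lemma ProdWeightedIntegrable.of_integrable_div (hN₁ : 0 ≤ N₁) (hN₂ : 0 ≤ N₂)
    (hmeas : AEStronglyMeasurable u)
    (hu : Integrable fun p => |u p| / ((1 + ‖p.1‖ ^ N₁) * (1 + ‖p.2‖ ^ N₂))) :
    ProdWeightedIntegrable N₁ N₂ u := by
  have hcont₁ := continuous_one_add_norm_rpow (V := E) (-N₁)
  have hcont₂ := continuous_one_add_norm_rpow (V := T) (-N₂)
  refine (hu.const_mul 4).mono' (((hcont₁.comp continuous_fst).mul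
    (hcont₂.comp continuous_snd)).aestronglyMeasurable.mul hmeas) (.of_forall fun p => ?_)
  have h₁ := one_add_rpow_neg_le (norm_nonneg p.1) hN₁
  have h₂ := one_add_rpow_neg_le (norm_nonneg p.2) hN₂
  rw [norm_mul, Real.norm_eq_abs (u p), Real.norm_of_nonneg (by positivity)]
  calc (1 + ‖p.1‖) ^ (-N₁) * (1 + ‖p.2‖) ^ (-N₂) * |u p|
      ≤ 2 / (1 + ‖p.1‖ ^ N₁) * (2 / (1 + ‖p.2‖ ^ N₂)) * |u p| := by gcongr
    _ = 4 * (|u p| / ((1 + ‖p.1‖ ^ N₁) * (1 + ‖p.2‖ ^ N₂))) := by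
        field_simp
        ring

theorem IsDualSolution.exists_ae_eq_const {L : LevyOperator E} {M : LevyOperator T}
    (hL : L.IsElliptic) (hM : M.IsElliptic) (hN₁ : 0 ≤ N₁) (hN₁d : N₁ < Module.finrank ℝ E + 2)
    (hN₂ : 0 ≤ N₂) (hN₂d : N₂ < Module.finrank ℝ T + 1) (hu : ProdWeightedIntegrable N₁ N₂ u)
    (hsol : IsDualSolution L M u)
    (hlow : ∀ᵐ t, ∀ ε > 0, ∀ᶠ x in Bornology.cobounded E, -ε * ‖x‖ ≤ u (x, t)) :
    ∃ c, ∀ᵐ p, u p = c := by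
  have hslice : ∀ᵐ t, ∃ c, ∀ᵐ x, u (x, t) = c := by
    filter_upwards [hsol.ae_isLowPassInvariant_slice hL hM hN₁ hN₂ hN₂d hu,
      hu.ae_weightedIntegrable_slice, hlow] with t hinv hweight hlowt
    exact hinv.exists_ae_eq_const_of_lower_bound hN₁ hN₁d hweight hlowt
  obtain ⟨c, hc⟩ := hsol.exists_ae_eq_const_of_ae_slice hM hN₂ hN₂d hu hslice
  exact ⟨c, ae_prod_eq_const_of_ae_ae hu.aestronglyMeasurable hc⟩

end DualSolution

/-! ### Stable operators -/

lemma measurable_ofReal_mul_norm_rpow {E : Type*} [NormedAddCommGroup E] [MeasurableSpace E]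
    [BorelSpace E] (κ p : ℝ) : Measurable fun y : E => ENNReal.ofReal (κ * ‖y‖ ^ p) := by
  fun_prop

section StableMeasure

open scoped Pointwise

variable {E F : Type*} [NormedAddCommGroup E] [NormedSpace ℝ E] [MeasurableSpace E]
  [NormedAddCommGroup F] [NormedSpace ℝ F] {m : ℕ} {σ κ : ℝ} {S : Set E}

lemma integrableOn_min_one_pow_mul_rpow (h0 : 0 < σ) (hm : σ < m) :
    IntegrableOn (fun r : ℝ => min 1 (r ^ m) * r ^ (-1 - σ)) (Ioi 0) := by
  rw [← Ioc_union_Ioi_eq_Ioi (zero_le_one (α := ℝ))]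
  refine IntegrableOn.union ?_ ?_
  · have h : IntegrableOn (fun r : ℝ => r ^ (m - 1 - σ)) (Ioc 0 1) := by
      rw [← intervalIntegrable_iff_integrableOn_Ioc_of_le zero_le_one]
      exact intervalIntegral.intervalIntegrable_rpow' (by linarith)
    refine h.congr_fun (fun r hr => ?_) measurableSet_Ioc
    dsimp only
    rw [min_eq_right (pow_le_one₀ hr.1.le hr.2), ← Real.rpow_natCast, ← Real.rpow_add hr.1]
    ring_nf
  · have h : IntegrableOn (fun r : ℝ => r ^ (-1 - σ)) (Ioi 1) :=
      integrableOn_Ioi_rpow_of_lt (by linarith) one_pos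
    refine h.congr_fun (fun r hr => ?_) measurableSet_Ioi
    dsimp only
    rw [min_eq_left (one_le_pow₀ (le_of_lt hr)), one_mul]

/-- The `σ`-stable Lévy measure `κ ‖y‖ ^ (-(d + σ)) dy` on a cone `S` of a `d`-dimensional space. -/
noncomputable def stableMeasure (σ κ : ℝ) (S : Set E) (μ : Measure E) : Measure E :=
  (μ.restrict S).withDensity fun y => .ofReal (κ * ‖y‖ ^ (-(Module.finrank ℝ E + σ)))

variable [BorelSpace E] {μ : Measure E}

lemma integral_stableMeasure (hκ : 0 ≤ κ) (f : E → F) : ∫ y, f y ∂stableMeasure σ κ S μ =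
    ∫ y in S, (κ * ‖y‖ ^ (-(Module.finrank ℝ E + σ))) • f y ∂μ := by
  rw [stableMeasure, integral_withDensity_eq_integral_toReal_smul
    (measurable_ofReal_mul_norm_rpow _ _) (.of_forall fun _ => ENNReal.ofReal_lt_top)]
  congr 1 with y
  rw [ENNReal.toReal_ofReal (by positivity)]

lemma stableMeasure_pos [μ.IsOpenPosMeasure] (hκ : 0 < κ) (hS : IsOpen S) {A : Set E}
    (hA : IsOpen A) (hA0 : (0 : E) ∉ A) (hSA : (S ∩ A).Nonempty) :
    0 < stableMeasure σ κ S μ A := by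
  refine pos_iff_ne_zero.2 fun h => ?_
  rw [stableMeasure, withDensity_apply_eq_zero (measurable_ofReal_mul_norm_rpow _ _)] at h
  refine ((hS.inter hA).measure_pos μ hSA).ne' (measure_mono_null (fun y hy => ?_)
    ((Measure.restrict_apply' hS.measurableSet).symm.trans h))
  have hy0 : 0 < ‖y‖ := norm_pos_iff.2 fun h0 => hA0 (h0 ▸ hy.2)
  have hdens : 0 < κ * ‖y‖ ^ (-(Module.finrank ℝ E + σ)) := by positivity
  exact ⟨⟨(ENNReal.ofReal_pos.2 hdens).ne', hy.2⟩, hy.1⟩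

lemma integral_stableMeasure_comp_isometry (hκ : 0 ≤ κ) (A : E ≃ₗᵢ[ℝ] E)
    (hA : MeasurePreserving A μ μ) (f : E → F) :
    ∫ y, f (A y) ∂stableMeasure σ κ univ μ = ∫ y, f y ∂stableMeasure σ κ univ μ := by
  simp only [integral_stableMeasure hκ, Measure.restrict_univ]
  have h := hA.integral_comp A.toHomeomorph.measurableEmbedding fun y =>
    (κ * ‖y‖ ^ (-(Module.finrank ℝ E + σ))) • f y
  simpa only [A.norm_map] using h

variable [FiniteDimensional ℝ E] [μ.IsAddHaarMeasure]

lemma integrable_stableMeasure_min_one_norm_pow (h0 : 0 < σ) (hm : σ < m) :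
    Integrable (fun y => min 1 (‖y‖ ^ m)) (stableMeasure σ κ S μ) := by
  have hm0 : m ≠ 0 := fun h => by simp only [h, Nat.cast_zero] at hm; linarith
  rcases subsingleton_or_nontrivial E with hE | hE
  · simp only [Subsingleton.elim _ (0 : E), norm_zero, zero_pow hm0, zero_le_one, min_eq_right]
    exact integrable_zero _ _ _
  have hradial :
      Integrable (fun y : E => min 1 (‖y‖ ^ m) * ‖y‖ ^ (-(Module.finrank ℝ E + σ))) μ := by
    refine (integrable_fun_norm_addHaar μ
      (f := fun r : ℝ => min 1 (r ^ m) * r ^ (-(Module.finrank ℝ E + σ)))).2 ?_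
    refine (integrableOn_min_one_pow_mul_rpow h0 hm).congr_fun (fun r (hr : 0 < r) => ?_)
      measurableSet_Ioi
    dsimp only
    rw [smul_eq_mul, mul_left_comm, ← Real.rpow_natCast r (Module.finrank ℝ E - 1),
      ← Real.rpow_add hr, Nat.cast_pred Module.finrank_pos]
    ring_nf
  rw [stableMeasure, integrable_withDensity_iff (measurable_ofReal_mul_norm_rpow _ _)
    (.of_forall fun _ => ENNReal.ofReal_lt_top)]
  refine (hradial.mul_const (max κ 0)).integrableOn.congr (.of_forall fun y => ?_)
  have hdens := max_mul_of_nonneg κ 0 (by positivity : 0 ≤ ‖y‖ ^ (-(Module.finrank ℝ E + σ)))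
  rw [zero_mul] at hdens
  dsimp only
  rw [ENNReal.toReal_ofReal', ← hdens]
  ring

lemma integral_stableMeasure_comp_smul (hκ : 0 ≤ κ) {r : ℝ} (hr : 0 < r) (hS : r • S = S)
    (f : E → F) :
    ∫ y, f (r • y) ∂stableMeasure σ κ S μ = r ^ σ • ∫ y, f y ∂stableMeasure σ κ S μ := by
  have hscale := Measure.setIntegral_comp_smul_of_pos μ
    (fun y => (κ * ‖y‖ ^ (-(Module.finrank ℝ E + σ))) • f y) S hr
  have hdens : ∀ y : E, κ * ‖y‖ ^ (-(Module.finrank ℝ E + σ)) =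
      r ^ (Module.finrank ℝ E + σ) * (κ * ‖r • y‖ ^ (-(Module.finrank ℝ E + σ))) := fun y => by
    rw [norm_smul, Real.norm_of_nonneg hr.le, Real.mul_rpow hr.le (norm_nonneg y),
      Real.rpow_neg hr.le]
    have := (Real.rpow_pos_of_pos hr (Module.finrank ℝ E + σ)).ne'
    field_simp
  have hpow : r ^ (Module.finrank ℝ E + σ) * (r ^ Module.finrank ℝ E)⁻¹ = r ^ σ := by
    rw [Real.rpow_add hr, Real.rpow_natCast]
    field_simp
  simp only [integral_stableMeasure hκ]
  calc ∫ y in S, (κ * ‖y‖ ^ (-(Module.finrank ℝ E + σ))) • f (r • y) ∂μ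
      = r ^ (Module.finrank ℝ E + σ) •
          ∫ y in S, (κ * ‖r • y‖ ^ (-(Module.finrank ℝ E + σ))) • f (r • y) ∂μ := by
        rw [← integral_smul]
        refine integral_congr_ae (.of_forall fun y => ?_)
        dsimp only
        rw [smul_smul, ← hdens]
    _ = _ := by rw [hscale, hS, smul_smul, hpow]

end StableMeasure

open scoped Pointwise in
lemma exists_mem_planeWave_ne_one {V : Type*} [NormedAddCommGroup V] [InnerProductSpace ℝ V]
    {S : Set V} (hcone : ∀ r : ℝ, 0 < r → r • S = S) {ξ : V} (hS : ∃ y ∈ S, inner ℝ ξ y ≠ 0) :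
    ∃ y ∈ S, planeWave ξ y ≠ 1 := by
  obtain ⟨y, hy, hinner⟩ := hS
  have hr : 0 < (2 * |inner ℝ ξ y|)⁻¹ := by positivity
  refine ⟨(2 * |inner ℝ ξ y|)⁻¹ • y, hcone _ hr ▸ smul_mem_smul_set hy, fun h => ?_⟩
  have hcos := congrArg Complex.re h
  have hangle : |2 * π * ((2 * |inner ℝ ξ y|)⁻¹ * inner ℝ ξ y)| = π := by
    rw [abs_mul, abs_mul (_⁻¹), abs_of_pos hr, abs_of_pos Real.two_pi_pos]
    field_simp
  rw [planeWave_apply, Real.fourierChar_apply, real_inner_smul_right,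
    Complex.exp_ofReal_mul_I_re, ← Real.cos_abs, hangle, Real.cos_pi, Complex.one_re] at hcos
  norm_num at hcos

namespace LevyOperator

section Ellipticity

variable {V : Type*} [NormedAddCommGroup V] [InnerProductSpace ℝ V] [MeasurableSpace V]
  {L : LevyOperator V} {ξ : V}

lemma re_symbol_neg_of_measure_pos [FiniteDimensional ℝ V] [BorelSpace V]
    (hre : ∀ z : ℂ, ‖z‖ = 1 → z ≠ 1 → ((z - 1) ^ L.order * z⁻¹ ^ L.shift).re < 0)
    (hξ : 0 < L.measure {y | planeWave ξ y ≠ 1}) : (L.symbol ξ).re < 0 := by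
  set g : V → ℂ := fun y => (planeWave ξ y - 1) ^ L.order * (planeWave ξ y)⁻¹ ^ L.shift
  have hcont : Continuous (planeWave ξ) :=
    continuous_planeWave.comp (continuous_const.prodMk continuous_id)
  have hint : Integrable g L.measure := by
    refine (L.integrable_min.const_mul ((2 * π * (1 + ‖ξ‖)) ^ L.order)).mono'
      (by measurability) (.of_forall fun y => ?_)
    simpa [g, fwdDiff_addChar_eq] using norm_fwdDiff_iter_planeWave_le ξ y 0 L.order
  have hneg : ∀ y, planeWave ξ y ≠ 1 → 0 < -(g y).re := fun y hy =>
    neg_pos.2 (hre _ (norm_planeWave ξ y) hy)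
  have hzero : ∀ y, planeWave ξ y = 1 → -(g y).re = 0 := fun y hy => by
    simp only [g, hy, sub_self, zero_pow L.order_ne_zero, zero_mul, Complex.zero_re, neg_zero]
  have hpos : 0 < ∫ y, -(g y).re ∂L.measure := by
    refine (integral_pos_iff_support_of_nonneg (fun y => ?_) hint.re.neg).2
      (hξ.trans_le (measure_mono fun y hy => (hneg y hy).ne'))
    rcases eq_or_ne (planeWave ξ y) 1 with hy | hy
    exacts [(hzero y hy).ge, (hneg y hy).le]
  have hre_symbol : (L.symbol ξ).re = ∫ y, (g y).re ∂L.measure := by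
    rw [symbol_eq_integral]
    exact (Complex.reCLM.integral_comp_comm hint).symm
  rwa [integral_neg, ← hre_symbol, neg_pos] at hpos

end Ellipticity

section Stable

open scoped Pointwise

variable {E : Type*} [NormedAddCommGroup E] [InnerProductSpace ℝ E] [FiniteDimensional ℝ E]
  [MeasurableSpace E] [BorelSpace E] {m : ℕ} {σ κ : ℝ} {S : Set E}

/-- The Lévy operator of order `m` and shift `k` whose Lévy measure is `σ`-stable on `S`. -/
noncomputable def stable (m k : ℕ) (h0 : 0 < σ) (hm : σ < m) (κ : ℝ) (S : Set E) :
    LevyOperator E where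
  order := m
  shift := k
  measure := stableMeasure σ κ S volume
  order_ne_zero h := by simp only [h, Nat.cast_zero] at hm; linarith
  sFinite := by rw [stableMeasure]; infer_instance
  integrable_min := integrable_stableMeasure_min_one_norm_pow h0 hm

variable {k : ℕ} {h0 : 0 < σ} {hm : σ < m}

lemma symbol_stable_smul (hκ : 0 ≤ κ) {r : ℝ} (hr : 0 < r) (hS : r • S = S) (ξ : E) :
    (stable m k h0 hm κ S).symbol (r • ξ) = r ^ σ • (stable m k h0 hm κ S).symbol ξ := by
  have hwave : ∀ y, planeWave (r • ξ) y = planeWave ξ (r • y) := fun y => by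
    rw [planeWave_apply, planeWave_apply, real_inner_smul_left, real_inner_smul_right]
  simp only [symbol_eq_integral, stable, hwave]
  exact integral_stableMeasure_comp_smul hκ hr hS
    fun y => (planeWave ξ y - 1) ^ m * (planeWave ξ y)⁻¹ ^ k

lemma symbol_stable_univ_eq_of_norm_eq (hκ : 0 ≤ κ) {ξ η : E} (h : ‖ξ‖ = ‖η‖) :
    (stable m k h0 hm κ univ).symbol ξ = (stable m k h0 hm κ univ).symbol η := by
  have hreflection := Submodule.reflection_sub h
  set A := Submodule.reflection (Submodule.span ℝ {ξ - η})ᗮ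
  have hwave : ∀ y, planeWave η (A y) = planeWave ξ y := fun y => by
    rw [planeWave_apply, planeWave_apply, ← hreflection, A.inner_map_map]
  simp only [symbol_eq_integral, stable, ← hwave]
  exact integral_stableMeasure_comp_isometry hκ A A.measurePreserving
    fun y => (planeWave η y - 1) ^ m * (planeWave η y)⁻¹ ^ k

theorem isElliptic_stable (hκ : 0 < κ) (hS : IsOpen S) (hcone : ∀ r : ℝ, 0 < r → r • S = S)
    (hspan : ∀ ξ ≠ 0, ∃ y ∈ S, inner ℝ ξ y ≠ 0)
    (hre : ∀ z : ℂ, ‖z‖ = 1 → z ≠ 1 → ((z - 1) ^ m * z⁻¹ ^ k).re < 0)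
    (hradial : ∀ ξ₀ ≠ 0, ∀ᶠ ξ in 𝓝 ξ₀, (stable m k h0 hm κ S).symbol ξ =
      (stable m k h0 hm κ S).symbol ((‖ξ‖ / ‖ξ₀‖) • ξ₀)) :
    (stable m k h0 hm κ S).IsElliptic where
  contDiffAt_symbol ξ₀ hξ₀ := by
    have hpow : ContDiffAt ℝ ∞ (fun ξ : E => (‖ξ‖ / ‖ξ₀‖) ^ σ) ξ₀ :=
      ((contDiffAt_norm ℝ hξ₀).div_const _).rpow_const_of_ne (by simpa using hξ₀)
    refine (hpow.smul contDiffAt_const).congr_of_eventuallyEq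
      (f := fun ξ => (‖ξ‖ / ‖ξ₀‖) ^ σ • (stable m k h0 hm κ S).symbol ξ₀) ?_
    filter_upwards [hradial ξ₀ hξ₀, isOpen_ne.mem_nhds hξ₀] with ξ hξ (hξ0 : ξ ≠ 0)
    have hr : 0 < ‖ξ‖ / ‖ξ₀‖ := by positivity
    rw [hξ, symbol_stable_smul hκ.le hr (hcone _ hr)]
  re_symbol_neg ξ hξ := by
    have hcont : Continuous (planeWave ξ) :=
      continuous_planeWave.comp (continuous_const.prodMk continuous_id)
    refine re_symbol_neg_of_measure_pos hre (stableMeasure_pos hκ hS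
      (isOpen_ne.preimage hcont) (fun h => h (AddChar.map_zero_eq_one _)) ?_)
    exact exists_mem_planeWave_ne_one hcone (hspan ξ hξ)

end Stable

end LevyOperator

lemma re_lt_one_of_norm_eq_one {z : ℂ} (hz : ‖z‖ = 1) (h1 : z ≠ 1) : z.re < 1 := by
  have hre : z.re ≤ 1 := hz ▸ Complex.re_le_norm z
  refine hre.lt_of_ne fun hre => h1 (Complex.ext hre ?_)
  simpa [hre] using not_imp_comm.1 Complex.abs_re_lt_norm.2 (by simp [hre, hz])

namespace LevyOperator

variable {σ κ : ℝ} {h0 : 0 < σ}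

theorem isElliptic_stable_Ioi {h1 : σ < (1 : ℕ)} (hκ : 0 < κ) :
    (stable 1 0 h0 h1 κ (Ioi (0 : ℝ))).IsElliptic := by
  refine isElliptic_stable hκ isOpen_Ioi (fun r hr => ?_) (fun ξ hξ => ⟨1, mem_Ioi.2 one_pos, ?_⟩)
    (fun z hz h1 => ?_) fun ξ₀ hξ₀ => ?_
  · rw [LinearOrderedField.smul_Ioi hr, mul_zero]
  · simpa using hξ
  · simpa using re_lt_one_of_norm_eq_one hz h1
  · have hsign : ∀ᶠ ξ in 𝓝 ξ₀, 0 < ξ / ξ₀ :=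
      (continuousAt_id.div_const ξ₀).eventually_const_lt (by simp [hξ₀])
    filter_upwards [hsign] with ξ hξ
    rw [← norm_div, Real.norm_of_nonneg hξ.le, smul_eq_mul, div_mul_cancel₀ ξ hξ₀]

theorem isElliptic_stable_univ {E : Type*} [NormedAddCommGroup E] [InnerProductSpace ℝ E]
    [FiniteDimensional ℝ E] [MeasurableSpace E] [BorelSpace E] {h2 : σ < (2 : ℕ)} (hκ : 0 < κ) :
    (stable 2 1 h0 h2 κ (univ : Set E)).IsElliptic := by
  refine isElliptic_stable hκ isOpen_univ (fun r hr => smul_set_univ₀ hr.ne')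
    (fun ξ hξ => ⟨ξ, mem_univ ξ, by simpa using hξ⟩) (fun z hz h1 => ?_) fun ξ₀ hξ₀ =>
      .of_forall fun ξ => symbol_stable_univ_eq_of_norm_eq hκ.le ?_
  · have hz0 : z ≠ 0 := norm_ne_zero_iff.1 (by simp [hz])
    have hexpand : (z - 1) ^ 2 * z⁻¹ ^ 1 = z + z⁻¹ - 2 := by
      field_simp
      ring
    have hconj : z⁻¹.re = z.re := by rw [Complex.inv_eq_conj hz, Complex.conj_re]
    rw [hexpand, Complex.sub_re, Complex.add_re, hconj, Complex.re_ofNat]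
    linarith [re_lt_one_of_norm_eq_one hz h1]
  · rw [norm_smul, norm_div, norm_norm, norm_norm, div_mul_cancel₀ _ (norm_ne_zero_iff.2 hξ₀)]

end LevyOperator

/-! ### The Marchaud derivative and the fractional Laplacian -/

lemma Calpha_pos {α : ℝ} (hα0 : 0 < α) (hα1 : α < 1) : 0 < Calpha α := by
  refine one_div_pos.2 (abs_pos.2 (Real.Gamma_ne_zero fun m h => ?_))
  have hαm : α = m := neg_injective h
  have hm : m < 1 := by exact_mod_cast hαm ▸ hα1
  simp [hαm, Nat.lt_one_iff.1 hm] at hα0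

lemma Cns_pos (n : ℕ) {s : ℝ} (hs0 : 0 < s) (hs1 : s < 1) : 0 < Cns n s := by
  have hgamma_neg : 0 < |Real.Gamma (-s)| := one_div_pos.1 (Calpha_pos hs0 hs1)
  exact div_pos (mul_pos (by positivity) (Real.Gamma_pos_of_pos (by positivity)))
    (mul_pos (by positivity) hgamma_neg)

/-- The negative of the right Marchaud derivative. -/
noncomputable def marchaudOperator {α : ℝ} (hα0 : 0 < α) (hα1 : α < 1) : LevyOperator ℝ :=
  .stable 1 0 hα0 (by rwa [Nat.cast_one]) (Calpha α) (Ioi 0)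

/-- The negative of the fractional Laplacian `(-Δ)^s`. -/
noncomputable def fracLapOperator (n : ℕ) {s : ℝ} (hs0 : 0 < s) (hs1 : s < 1) :
    LevyOperator (EuclideanSpace ℝ (Fin n)) :=
  .stable (σ := 2 * s) 2 1 (by linarith) (by push_cast; linarith) (Cns n s / 2) univ

section Operators

variable {n : ℕ} {α s : ℝ} (hα0 : 0 < α) (hα1 : α < 1) (hs0 : 0 < s) (hs1 : s < 1)
  (φ : EuclideanSpace ℝ (Fin n) × ℝ → ℝ) (x : EuclideanSpace ℝ (Fin n)) (t : ℝ)

lemma marchaudRight_eq_neg_op :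
    marchaudRight α φ x t = -(marchaudOperator hα0 hα1).op (fun τ => φ (x, τ)) t := by
  have htranslate := (measurePreserving_add_left volume t).setIntegral_preimage_emb
    (measurableEmbedding_addLeft t) (fun τ => (φ (x, t) - φ (x, τ)) / (τ - t) ^ (1 + α)) (Ioi t)
  rw [preimage_const_add_Ioi, sub_self] at htranslate
  rw [marchaudRight, ← htranslate, ← integral_const_mul, LevyOperator.op]
  simp only [marchaudOperator, LevyOperator.stable,
    integral_stableMeasure (Calpha_pos hα0 hα1).le]
  rw [← integral_neg]
  refine setIntegral_congr_fun measurableSet_Ioi fun r (hr : 0 < r) => ?_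
  simp only [Function.iterate_one, fwdDiff, zero_smul, sub_zero, Module.finrank_self, Nat.cast_one,
    Real.norm_of_nonneg hr.le, add_sub_cancel_left, Real.rpow_neg hr.le, smul_eq_mul]
  ring

lemma fracLap_eq_neg_op :
    fracLap s φ x t = -(fracLapOperator n hs0 hs1).op (fun y => φ (y, t)) x := by
  rw [fracLap, ← integral_const_mul, LevyOperator.op]
  simp only [fracLapOperator, LevyOperator.stable,
    integral_stableMeasure (half_pos (Cns_pos n hs0 hs1)).le]
  rw [Measure.restrict_univ, ← integral_neg]
  congr 1 with y
  have hsecond : Δ_[y] ^[2] (fun z => φ (z, t)) (x - 1 • y) =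
      φ (x + y, t) - 2 * φ (x, t) + φ (x - y, t) := by
    simp only [Function.iterate_succ, Function.iterate_zero, Function.comp_apply, id, fwdDiff,
      one_smul, sub_add_cancel]
    ring
  rw [hsecond, finrank_euclideanSpace_fin, Real.rpow_neg (norm_nonneg y), smul_eq_mul]
  ring

lemma isDualSolution_fracLapOperator_marchaudOperator {u : EuclideanSpace ℝ (Fin n) × ℝ → ℝ}
    (hu : ∀ φ : 𝓢(EuclideanSpace ℝ (Fin n) × ℝ, ℝ),
      ∫ t, ∫ x, u (x, t) * (marchaudRight α φ x t + fracLap s φ x t) = 0) :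
    IsDualSolution (fracLapOperator n hs0 hs1) (marchaudOperator hα0 hα1) u := fun φ => by
  have hsol := hu (SchwartzMap.compCLMOfContinuousLinearEquiv ℝ
    (WithLp.prodContinuousLinearEquiv 2 ℝ (EuclideanSpace ℝ (Fin n)) ℝ).symm φ)
  simp only [marchaudRight_eq_neg_op hα0 hα1, fracLap_eq_neg_op hs0 hs1, ← neg_add, mul_neg,
    integral_neg, neg_eq_zero, add_comm (LevyOperator.op (marchaudOperator _ _) _ _)] at hsol
  simp only [LevyOperator.op_onFst _ φ.continuous, LevyOperator.op_onSnd _ φ.continuous]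
  exact hsol

end Operators

lemma eventually_neg_mul_norm_le {E : Type*} [NormedAddCommGroup E] {v : E → ℝ} {γ ε R : ℝ}
    (hγ : γ ≤ 1) (hε : 0 ≤ ε) (hv : ∀ x, R ≤ ‖x‖ → -ε * ‖x‖ ^ γ ≤ v x) :
    ∀ᶠ x in Bornology.cobounded E, -ε * ‖x‖ ≤ v x := by
  filter_upwards [tendsto_norm_cobounded_atTop.eventually_ge_atTop (max R 1)] with x hx
  have hpow : ‖x‖ ^ γ ≤ ‖x‖ := by
    simpa using Real.rpow_le_rpow_of_exponent_le ((le_max_right R 1).trans hx) hγ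
  exact (mul_le_mul_of_nonpos_left hpow (neg_nonpos.2 hε)).trans (hv x ((le_max_left R 1).trans hx))

theorem liouville_dual_fractional_large_s_general
    {n : ℕ} {α s : ℝ} (hα0 : 0 < α) (hα1 : α < 1) (hs0 : 0 < s) (hs1 : s < 1)
    {u : EuclideanSpace ℝ (Fin n) × ℝ → ℝ} (hu_meas : AEStronglyMeasurable u)
    (hu_space : Integrable fun p : EuclideanSpace ℝ (Fin n) × ℝ =>
      |u p| / ((1 + ‖p.1‖ ^ ((n : ℝ) + 2 * s)) * (1 + |p.2| ^ (1 + α))))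
    (hu_sol : ∀ φ : 𝓢(EuclideanSpace ℝ (Fin n) × ℝ, ℝ),
      ∫ t, ∫ x, u (x, t) * (marchaudRight α φ x t + fracLap s φ x t) = 0)
    {γ : ℝ} (hγ : γ ≤ 1) (hasymp : ∀ᵐ t, ∀ ε > (0 : ℝ), ∃ R > (0 : ℝ),
      ∀ x : EuclideanSpace ℝ (Fin n), R ≤ ‖x‖ → -ε * ‖x‖ ^ γ ≤ u (x, t)) :
    ∃ c : ℝ, ∀ᵐ p, u p = c := by
  have hfrac : (fracLapOperator n hs0 hs1).IsElliptic :=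
    LevyOperator.isElliptic_stable_univ (half_pos (Cns_pos n hs0 hs1))
  have hmarchaud : (marchaudOperator hα0 hα1).IsElliptic :=
    LevyOperator.isElliptic_stable_Ioi (Calpha_pos hα0 hα1)
  have hu : ProdWeightedIntegrable (n + 2 * s) (1 + α) u :=
    ProdWeightedIntegrable.of_integrable_div (by positivity) (by positivity) hu_meas hu_space
  refine (isDualSolution_fracLapOperator_marchaudOperator hα0 hα1 hs0 hs1
    hu_sol).exists_ae_eq_const hfrac hmarchaud (by positivity) ?_ (by positivity) ?_ hu ?_
  · rw [finrank_euclideanSpace_fin]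
    linarith
  · rw [Module.finrank_self, Nat.cast_one]
    linarith
  · filter_upwards [hasymp] with t ht ε hε
    obtain ⟨R, -, hR⟩ := ht ε hε
    exact eventually_neg_mul_norm_le hγ hε.le hR

/-- Liouville theorem for `∂_t^α u + (-Δ)^s u = 0` in `ℝⁿ × ℝ` for
`1/2 < s < 1`, under the asymptotic assumption
`liminf_{|x|→∞} u(x,t)/|x|^γ ≥ 0` for some `0 ≤ γ ≤ 1`:
every such distributional solution `u ∈ 𝓛_{2s,α}(ℝⁿ×ℝ)` is a.e. constant. -/
theorem liouville_dual_fractional_large_s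
    (n : ℕ) (hn : 2 ≤ n) (α s : ℝ) (hα0 : 0 < α) (hα1 : α < 1)
    (hs0 : 1 / 2 < s) (hs1 : s < 1)
    (u : EuclideanSpace ℝ (Fin n) × ℝ → ℝ)
    (hu_loc : LocallyIntegrable u)
    (hu_space : Integrable (fun p : EuclideanSpace ℝ (Fin n) × ℝ =>
      |u p| / ((1 + ‖p.1‖ ^ ((n : ℝ) + 2 * s)) * (1 + |p.2| ^ (1 + α)))))
    (hu_sol : ∀ φ : SchwartzMap (EuclideanSpace ℝ (Fin n) × ℝ) ℝ,
      ∫ t : ℝ, ∫ x : EuclideanSpace ℝ (Fin n),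
        u (x, t) * (marchaudRight α (⇑φ) x t + fracLap s (⇑φ) x t) = 0)
    (hasymp : ∃ γ : ℝ, 0 ≤ γ ∧ γ ≤ 1 ∧ ∀ t : ℝ, ∀ ε > (0 : ℝ), ∃ R > (0 : ℝ),
      ∀ x : EuclideanSpace ℝ (Fin n), R ≤ ‖x‖ → -ε * ‖x‖ ^ γ ≤ u (x, t)) :
    ∃ c : ℝ, ∀ᵐ p : EuclideanSpace ℝ (Fin n) × ℝ ∂volume, u p = c := by
  obtain ⟨γ, -, hγ1, hγ⟩ := hasymp
  exact liouville_dual_fractional_large_s_general hα0 hα1 (by linarith) hs1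
    hu_loc.aestronglyMeasurable hu_space hu_sol hγ1 (.of_forall hγ)
end

section
/- Let 0 < α < 1. Suppose u ∈ 𝓛_α(ℝ), i.e. u : ℝ → ℝ is locally integrable with ∫_{-∞}^{+∞} |u(t)|/(1+|t|^{1+α}) dt < ∞, and suppose that ∫_{-∞}^{+∞} u(t)·D_right^α φ(t) dt = 0 for every real-valued Schwartz function φ on ℝ, where D_right^α φ(t) = C_α ∫_t^∞ (φ(t) − φ(τ))/(τ−t)^{1+α} dτ and C_α = 1/|Γ(−α)|. Then u is equal almost everywhere to a constant. -/
open MeasureTheory Set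

/-- The right Marchaud fractional derivative of order `α` of a function of one real
variable: `D_right^α φ(t) = C_α ∫_t^∞ (φ(t) - φ(τ))/(τ-t)^{1+α} dτ`, `C_α = 1/|Γ(-α)|`. -/
noncomputable def marchaudRight1d (α : ℝ) (φ : ℝ → ℝ) (t : ℝ) : ℝ :=
  (1 / |Real.Gamma (-α)|) * ∫ τ in Ioi t, (φ t - φ τ) / (τ - t) ^ (1 + α)

/-! For a fixed `η ∈ C_c^∞`, the function `∫₀^∞ r^(α - 1) η'(t + r) dr` has right Marchaud
derivative `c η'` with `c > 0`, so if it were an admissible test function, `∫ u η' = 0` would follow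
at once and `u` would be constant. Its kernel decays too slowly, so it is cut off: take
`φ(t) = ∫₀^∞ r^(α - 1) p(r) η'(t + r) dr` with `p(r) = b(a r)` for a bump function `b` and small
`a > 0`. The scaling `τ - t = s`, `r = s w`, `x = (1 + w) s` turns the Marchaud derivative of `φ`
into an average over `w` of `-∫₀^∞ p(v x) η''(t + x) dx`, `v = w / (1 + w) ∈ (0, 1)`. Green's
identity rewrites this as `η'(t) - ∫₀^∞ v² p''(v x) η(t + x) dx`. Since `p''` is small against
`(1 + |x|)^(-1-α)`, uniformly in `v`, the error is `≤ δ / (1 + |t|^(1 + α))` with `δ → 0` as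
`a → 0`, exactly what the growth condition on `u` absorbs. -/

open Filter Topology
open scoped ContDiff

section VanishingDistributionalDerivative

variable {E : Type*} [NormedAddCommGroup E]

theorem exists_forall_notMem_Ioo_eq_zero {g : ℝ → E} (hgc : HasCompactSupport g) :
    ∃ M : ℝ, 0 ≤ M ∧ ∀ t ∉ Ioo (-M) M, g t = 0 := by
  obtain ⟨M, hM0, hM⟩ := hgc.isCompact.isBounded.exists_pos_norm_lt
  exact ⟨M, hM0.le, fun t ht => image_eq_zero_of_notMem_tsupport fun hts =>
    ht (abs_lt.1 (hM t hts))⟩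

variable [NormedSpace ℝ E] [CompleteSpace E]

theorem exists_deriv_eq_of_integral_eq_zero {g : ℝ → E} (hg : ContDiff ℝ ∞ g)
    (hgc : HasCompactSupport g) (hg0 : ∫ t, g t = 0) :
    ∃ η : ℝ → E, ContDiff ℝ ∞ η ∧ HasCompactSupport η ∧ deriv η = g := by
  obtain ⟨M, -, hM⟩ := exists_forall_notMem_Ioo_eq_zero hgc
  set η : ℝ → E := fun t => ∫ x in (-M)..t, g x
  have hη : ∀ t, HasDerivAt η (g t) t := fun t => hg.continuous.integral_hasStrictDerivAt _ t
    |>.hasDerivAt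
  have hη' : deriv η = g := funext fun t => (hη t).deriv
  refine ⟨η, contDiff_infty_iff_deriv.2 ⟨fun t => (hη t).differentiableAt, hη'.symm ▸ hg⟩, ?_, hη'⟩
  refine HasCompactSupport.intro (isCompact_Icc (a := -M) (b := M)) fun t ht => ?_
  rcases lt_or_ge t (-M) with h | h
  · refine intervalIntegral.integral_zero_ae (Eventually.of_forall fun x hx => hM x fun hx' => ?_)
    rw [uIoc_of_ge h.le] at hx
    exact hx.2.not_gt hx'.1
  · have hsupp : Function.support g ⊆ Ioc (-M) t := fun x hx => by
      have hxM : x ∈ Ioo (-M) M := not_imp_comm.1 (hM x) hx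
      exact ⟨hxM.1, not_lt.1 fun htx => ht ⟨h, (htx.trans hxM.2).le⟩⟩
    exact (intervalIntegral.integral_eq_integral_of_support_subset hsupp).trans hg0

theorem ae_eq_const_of_integral_deriv_smul_eq_zero {u : ℝ → E}
    (hu : LocallyIntegrable u)
    (h : ∀ η : ℝ → ℝ, ContDiff ℝ ∞ η → HasCompactSupport η → ∫ t, deriv η t • u t = 0) :
    ∃ c : E, ∀ᵐ t, u t = c := by
  let b : ContDiffBump (0 : ℝ) := default
  set ρ : ℝ → ℝ := b.normed volume
  have hρ : ContDiff ℝ ∞ ρ := b.contDiff_normed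
  have hρc : HasCompactSupport ρ := b.hasCompactSupport_normed
  have hint : ∀ {g : ℝ → ℝ}, ContDiff ℝ ∞ g → HasCompactSupport g →
      Integrable g ∧ Integrable (fun t => g t • u t) := fun hg hgc =>
    ⟨hg.continuous.integrable_of_hasCompactSupport hgc,
      hu.integrable_smul_left_of_hasCompactSupport hg.continuous hgc⟩
  refine ⟨∫ t, ρ t • u t, ae_eq_of_integral_contDiff_smul_eq hu
    (locallyIntegrable_const _) fun g hg hgc => ?_⟩
  set m := ∫ s, g s
  have hmean : ∫ t, (g t - m * ρ t) = 0 := by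
    rw [integral_sub (hint hg hgc).1 ((hint hρ hρc).1.const_mul _), integral_const_mul,
      b.integral_normed, mul_one, sub_self]
  obtain ⟨η, hη, hηc, hη'⟩ := exists_deriv_eq_of_integral_eq_zero
    (hg.sub (contDiff_const.mul hρ)) (hgc.sub hρc.mul_left) hmean
  have hzero : ∫ t, (g t • u t - m • ρ t • u t) = 0 := by
    simpa only [hη', sub_smul, mul_smul] using h η hη hηc
  have hmρu : Integrable fun t => m • ρ t • u t := (hint hρ hρc).2.smul m
  rw [integral_sub (hint hg hgc).2 hmρu, integral_smul, sub_eq_zero] at hzero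
  rw [hzero, integral_smul_const]

end VanishingDistributionalDerivative

section HalfLineIntegrals

theorem integral_Ioi_integral_comp_mul {Ω : Type*} [MeasurableSpace Ω] {ν : Measure Ω} [SFinite ν]
    {k l : Ω → ℝ} {F : Ω → ℝ → ℝ} {D : ℝ → ℝ} (hk : Measurable k) (hl : Measurable l)
    (hF : Measurable (Function.uncurry F)) (hl0 : ∀ᵐ w ∂ν, 0 < l w)
    (hkl : Integrable (fun w => k w / l w) ν) (hD : IntegrableOn D (Ioi 0))
    (hFD : ∀ᵐ w ∂ν, ∀ x, |F w x| ≤ D x) :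
    ∫ s in Ioi (0 : ℝ), ∫ w, k w * F w (l w * s) ∂ν
      = ∫ w, k w / l w * (∫ x in Ioi (0 : ℝ), F w x) ∂ν := by
  have hdil : ∀ w, 0 < l w → ∀ f : ℝ → ℝ,
      ∫ s in Ioi (0 : ℝ), f (l w * s) = (l w)⁻¹ * ∫ x in Ioi (0 : ℝ), f x := fun w hw f => by
    simpa only [mul_zero, smul_eq_mul] using integral_comp_mul_left_Ioi f 0 hw
  have hmeas : Measurable fun q : ℝ × Ω => k q.2 * F q.2 (l q.2 * q.1) :=
    (hk.comp measurable_snd).mul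
      (hF.comp (measurable_snd.prodMk ((hl.comp measurable_snd).mul measurable_fst)))
  have hFint : ∀ᵐ w ∂ν, IntegrableOn (F w) (Ioi 0) := hFD.mono fun w hw =>
    hD.mono' (hF.comp measurable_prodMk_left).aestronglyMeasurable (Eventually.of_forall hw)
  have hint : Integrable (fun q : ℝ × Ω => k q.2 * F q.2 (l q.2 * q.1))
      ((volume.restrict (Ioi 0)).prod ν) := by
    refine (integrable_prod_iff' hmeas.aestronglyMeasurable).2 ⟨?_, ?_⟩
    · filter_upwards [hl0, hFint] with w hw hFw
      have := (integrableOn_Ioi_comp_mul_left_iff (F w) 0 hw).2 (by rwa [mul_zero])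
      exact Integrable.const_mul this (k w)
    · refine (hkl.norm.mul_const (∫ x in Ioi (0 : ℝ), D x)).mono'
        hmeas.norm.aestronglyMeasurable.prod_swap.integral_prod_right' ?_
      filter_upwards [hl0, hFint, hFD] with w hw hFw hFDw
      simp only [norm_mul]
      rw [integral_const_mul, hdil w hw fun x => ‖F w x‖, norm_div, Real.norm_of_nonneg hw.le,
        div_eq_mul_inv, mul_assoc, Real.norm_of_nonneg (by positivity)]
      exact mul_le_mul_of_nonneg_left (mul_le_mul_of_nonneg_left
        (integral_mono hFw.norm hD hFDw) (inv_nonneg.2 hw.le)) (norm_nonneg _)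
  rw [integral_integral_swap hint]
  refine integral_congr_ae (hl0.mono fun w hw => ?_)
  simp only
  rw [integral_const_mul, hdil w hw, div_eq_mul_inv, mul_assoc]

theorem integral_Ioi_rpow_neg_mul_integral_unitInterval {α : ℝ} (hα : 0 < α) {G : ℝ → ℝ}
    (hG : Measurable G) (hGint : IntegrableOn (fun x => x ^ (-α) * G x) (Ioi 0)) :
    ∫ s in Ioi (0 : ℝ), s ^ (-α) * ∫ w in (0 : ℝ)..1, G (w * s)
      = (1 / α) * ∫ x in Ioi (0 : ℝ), x ^ (-α) * G x := by
  have hdiv : ∀ w ∈ Ioc (0 : ℝ) 1, w ^ (α - 1) = w ^ α / w := fun w hw =>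
    Real.rpow_sub_one hw.1.ne' α
  have hkl : IntegrableOn (fun w : ℝ => w ^ α / w) (Ioc 0 1) := by
    refine IntegrableOn.congr_fun ?_ hdiv measurableSet_Ioc
    exact (intervalIntegrable_iff_integrableOn_Ioc_of_le zero_le_one).1
      (intervalIntegral.intervalIntegrable_rpow' (by linarith))
  have hweight : ∫ w in Ioc (0 : ℝ) 1, w ^ α / w = 1 / α := by
    rw [← setIntegral_congr_fun measurableSet_Ioc hdiv,
      ← intervalIntegral.integral_of_le zero_le_one, integral_rpow (Or.inl (by linarith)),
      sub_add_cancel, Real.one_rpow, Real.zero_rpow hα.ne', sub_zero]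
  have hpos : ∀ᵐ w ∂volume.restrict (Ioc (0 : ℝ) 1), 0 < w :=
    (ae_restrict_mem measurableSet_Ioc).mono fun w hw => hw.1
  rw [← hweight, ← integral_mul_const, ← integral_Ioi_integral_comp_mul
    (l := fun w => w) (F := fun _ x => x ^ (-α) * G x) (by fun_prop) measurable_id (by fun_prop)
    hpos hkl hGint.norm (Eventually.of_forall fun _ _ => le_rfl)]
  refine setIntegral_congr_fun measurableSet_Ioi fun s (hs : 0 < s) => ?_
  rw [intervalIntegral.integral_of_le zero_le_one, ← integral_const_mul]
  refine setIntegral_congr_fun measurableSet_Ioc fun w hw => ?_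
  have hcancel : w ^ α * w ^ (-α) = 1 := by rw [← Real.rpow_add hw.1, add_neg_cancel,
    Real.rpow_zero]
  rw [Real.mul_rpow hw.1.le hs.le]
  linear_combination (-(s ^ (-α) * G (w * s))) * hcancel

theorem integral_Ioi_mul_deriv_deriv {p h : ℝ → ℝ} (hp : ContDiff ℝ 2 p) (hh : ContDiff ℝ 2 h)
    (hhc : HasCompactSupport h) (b : ℝ) :
    ∫ x in Ioi b, p x * deriv (deriv h) x
      = deriv p b * h b - p b * deriv h b + ∫ x in Ioi b, deriv (deriv p) x * h x := by
  have hp' : ContDiff ℝ 1 (deriv p) := hp.deriv'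
  have hh' : ContDiff ℝ 1 (deriv h) := hh.deriv'
  have hderiv : deriv (fun x => p x * deriv h x - deriv p x * h x)
      = fun x => p x * deriv (deriv h) x - deriv (deriv p) x * h x := funext fun x => by
    have d := ((hp.differentiable (by simp) x).hasDerivAt.mul
      (hh'.differentiable (by simp) x).hasDerivAt).sub
      ((hp'.differentiable (by simp) x).hasDerivAt.mul (hh.differentiable (by simp) x).hasDerivAt)
    exact d.deriv.trans (by ring)
  have hgreen := HasCompactSupport.integral_Ioi_deriv_eq
    (((hp.of_le (by simp)).mul hh').sub (hp'.mul (hh.of_le (by simp))))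
    (hhc.deriv.mul_left.sub hhc.mul_left) b
  have hleft : Integrable fun x => p x * deriv (deriv h) x :=
    (hp.continuous.mul (hh'.continuous_deriv le_rfl)).integrable_of_hasCompactSupport
      hhc.deriv.deriv.mul_left
  have hright : Integrable fun x => deriv (deriv p) x * h x :=
    ((hp'.continuous_deriv le_rfl).mul hh.continuous).integrable_of_hasCompactSupport hhc.mul_left
  rw [hderiv, integral_sub hleft.integrableOn hright.integrableOn] at hgreen
  linarith

theorem locallyIntegrable_rpow {β : ℝ} (hβ : -1 < β) : LocallyIntegrable fun x : ℝ => x ^ β := by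
  refine locallyIntegrable_of_norm_le_rpow (C := 1) (α := -β) (by simp) (by simp; linarith)
    (Eventually.of_forall fun x => ?_) (by fun_prop : Measurable _).aestronglyMeasurable
  simpa only [neg_neg, one_mul, Real.norm_eq_abs] using Real.abs_rpow_le_abs_rpow x β

theorem integrableOn_Ioi_rpow_div_one_add {α : ℝ} (hα0 : 0 < α) (hα1 : α < 1) :
    IntegrableOn (fun w : ℝ => w ^ (α - 1) / (1 + w)) (Ioi 0) := by
  refine (Real.integrableOn_rpowIntegrand₀₁_Ioi ⟨hα0, hα1⟩ zero_le_one).congr_fun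
    (fun w (hw : 0 < w) => ?_) measurableSet_Ioi
  simp only
  rw [Real.rpowIntegrand₀₁_eq_pow_div ⟨hα0, hα1⟩ hw.le zero_le_one, mul_one, add_comm]

theorem integral_Ioi_rpow_div_one_add_pos {α : ℝ} (hα0 : 0 < α) (hα1 : α < 1) :
    0 < ∫ w in Ioi (0 : ℝ), w ^ (α - 1) / (1 + w) := by
  have hpos : ∀ w ∈ Ioi (0 : ℝ), 0 < w ^ (α - 1) / (1 + w) := fun w (hw : 0 < w) => by positivity
  rw [setIntegral_pos_iff_support_of_nonneg_ae
    ((ae_restrict_mem measurableSet_Ioi).mono fun w hw => (hpos w hw).le)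
    (integrableOn_Ioi_rpow_div_one_add hα0 hα1),
    inter_eq_right.2 fun w hw => Function.mem_support.2 (hpos w hw).ne']
  simp

end HalfLineIntegrals

section RightCorrelation

/-- The one-sided correlation `∫₀^∞ k(r) g(t + r) dr` of a kernel `k` with a function `g`. For
`k(r) = r^(α - 1)` it is, up to the factor `Γ(α)`, the right fractional integral of order `α`. -/
noncomputable def rightCorrelation (k g : ℝ → ℝ) (t : ℝ) : ℝ :=
  ∫ r in Ioi (0 : ℝ), k r * g (t + r)

theorem rightCorrelation_eq_convolution (k g : ℝ → ℝ) :
    rightCorrelation k g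
      = convolution (fun r => (Ioi 0).indicator k (-r)) g (ContinuousLinearMap.mul ℝ ℝ) := by
  ext t
  rw [rightCorrelation, ← integral_indicator measurableSet_Ioi, ← integral_neg_eq_self,
    convolution_def]
  simp only [indicator_mul_left, ContinuousLinearMap.mul_apply', sub_eq_add_neg]

theorem locallyIntegrable_indicator_Ioi_comp_neg {k : ℝ → ℝ} (hk : LocallyIntegrable k) :
    LocallyIntegrable fun r => (Ioi 0).indicator k (-r) := by
  refine (locallyIntegrable_map_homeomorph (f := (Ioi 0).indicator k) (Homeomorph.neg ℝ)).1 ?_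
  rw [Homeomorph.coe_neg, Measure.map_neg_eq_self]
  exact hk.indicator measurableSet_Ioi

variable {k g : ℝ → ℝ}

theorem contDiff_rightCorrelation (hk : LocallyIntegrable k) {n : ℕ∞} (hg : ContDiff ℝ n g)
    (hgc : HasCompactSupport g) : ContDiff ℝ n (rightCorrelation k g) := by
  rw [rightCorrelation_eq_convolution]
  exact hgc.contDiff_convolution_right _ (locallyIntegrable_indicator_Ioi_comp_neg hk) hg

theorem deriv_rightCorrelation (hk : LocallyIntegrable k) (hg : ContDiff ℝ 1 g)
    (hgc : HasCompactSupport g) :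
    deriv (rightCorrelation k g) = rightCorrelation k (deriv g) := by
  ext t
  rw [rightCorrelation_eq_convolution, rightCorrelation_eq_convolution]
  exact (hgc.hasDerivAt_convolution_right _
    (locallyIntegrable_indicator_Ioi_comp_neg hk) hg t).deriv

theorem hasCompactSupport_rightCorrelation (hkc : HasCompactSupport k)
    (hgc : HasCompactSupport g) : HasCompactSupport (rightCorrelation k g) := by
  have hkc' : HasCompactSupport ((Ioi (0 : ℝ)).indicator k) :=
    hkc.mono (by rw [support_indicator]; exact inter_subset_right)
  rw [rightCorrelation_eq_convolution]
  exact HasCompactSupport.convolution _ (hkc'.comp_homeomorph (Homeomorph.neg ℝ)) hgc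

theorem integral_Ioi_rpow_neg_mul_rightCorrelation {α : ℝ} (hα0 : 0 < α) (hα1 : α < 1)
    {p : ℝ → ℝ} (hp : Measurable p) {C : ℝ} (hpC : ∀ x, |p x| ≤ C) (hg : Measurable g)
    {t : ℝ} (hgint : IntegrableOn (fun x => g (t + x)) (Ioi 0)) :
    ∫ s in Ioi (0 : ℝ), s ^ (-α) * rightCorrelation (fun r => r ^ (α - 1) * p r) g (t + s)
      = ∫ w in Ioi (0 : ℝ), w ^ (α - 1) / (1 + w) *
          ∫ x in Ioi (0 : ℝ), p (w / (1 + w) * x) * g (t + x) := by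
  have hpos : ∀ᵐ w ∂volume.restrict (Ioi (0 : ℝ)), 0 < w := ae_restrict_mem measurableSet_Ioi
  rw [← integral_Ioi_integral_comp_mul (F := fun w x => p (w / (1 + w) * x) * g (t + x))
    (D := fun x => C * |g (t + x)|) (by fun_prop) (by fun_prop)
    (by unfold Function.uncurry; fun_prop)
    (hpos.mono fun w hw => by linarith) (integrableOn_Ioi_rpow_div_one_add hα0 hα1)
    (hgint.norm.const_mul C)
    (Eventually.of_forall fun w x => by rw [abs_mul]; gcongr; exact hpC _)]
  refine setIntegral_congr_fun measurableSet_Ioi fun s (hs : 0 < s) => ?_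
  have hdil := integral_comp_mul_left_Ioi' (fun r => r ^ (α - 1) * p r * g (t + s + r)) 0 hs
  rw [mul_zero, smul_eq_mul] at hdil
  simp only [rightCorrelation]
  rw [← hdil, ← integral_const_mul, ← integral_const_mul]
  refine setIntegral_congr_fun measurableSet_Ioi fun w (hw : 0 < w) => ?_
  have hcancel : s ^ (-α) * (s * s ^ (α - 1)) = 1 := by
    rw [← mul_assoc, ← Real.rpow_add_one hs.ne', ← Real.rpow_add hs]
    simp
  have hsw : w / (1 + w) * ((1 + w) * s) = s * w := by field_simp
  rw [hsw, Real.mul_rpow hs.le hw.le, show t + (1 + w) * s = t + s + s * w by ring]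
  linear_combination (w ^ (α - 1) * p (s * w) * g (t + s + s * w)) * hcancel

end RightCorrelation

section MarchaudDerivative

variable {α : ℝ}

theorem marchaudRight1d_eq_integral_Ioi_zero (f : ℝ → ℝ) (t : ℝ) :
    marchaudRight1d α f t
      = (1 / |Real.Gamma (-α)|) * ∫ s in Ioi (0 : ℝ), (f t - f (t + s)) / s ^ (1 + α) := by
  rw [marchaudRight1d, ← integral_indicator measurableSet_Ioi,
    ← integral_indicator measurableSet_Ioi,
    ← integral_add_left_eq_self (fun τ => (Ioi t).indicator _ τ) t]
  congr 2
  ext s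
  simp only [indicator_apply, mem_Ioi, lt_add_iff_pos_right, add_sub_cancel_left]

theorem marchaudRight1d_eq_rightCorrelation (hα0 : 0 < α) (hα1 : α < 1) {f : ℝ → ℝ}
    (hf : ContDiff ℝ 1 f) (hfc : HasCompactSupport f) (t : ℝ) :
    marchaudRight1d α f t
      = -(1 / (α * |Real.Gamma (-α)|)) * rightCorrelation (fun s => s ^ (-α)) (deriv f) t := by
  have : Continuous (deriv f) := hf.continuous_deriv le_rfl
  have hquot : ∀ s ∈ Ioi (0 : ℝ), (f t - f (t + s)) / s ^ (1 + α)
      = -(s ^ (-α) * ∫ w in (0 : ℝ)..1, deriv f (t + w * s)) := fun s (hs : 0 < s) => by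
    have hmean := intervalIntegral.integral_unitInterval_deriv_eq_sub (f := f) (z₀ := t)
      (z₁ := s) (by fun_prop)
      fun w _ => (hf.differentiable (by simp) _).hasDerivAt
    simp only [smul_eq_mul] at hmean
    rw [← neg_sub, ← hmean, Real.rpow_add hs, Real.rpow_one, Real.rpow_neg hs.le]
    field_simp
  have hint : IntegrableOn (fun x => x ^ (-α) * deriv f (t + x)) (Ioi 0) :=
    ((locallyIntegrable_rpow (by linarith)).integrable_smul_right_of_hasCompactSupport
      (by fun_prop : Continuous fun x => deriv f (t + x))
      (hfc.deriv.comp_homeomorph (Homeomorph.addLeft t))).integrableOn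
  rw [marchaudRight1d_eq_integral_Ioi_zero, setIntegral_congr_fun measurableSet_Ioi hquot,
    integral_neg, integral_Ioi_rpow_neg_mul_integral_unitInterval hα0
      (G := fun x => deriv f (t + x)) (by fun_prop) hint, rightCorrelation]
  ring

theorem continuous_marchaudRight1d (hα0 : 0 < α) (hα1 : α < 1) {f : ℝ → ℝ}
    (hf : ContDiff ℝ 1 f) (hfc : HasCompactSupport f) : Continuous (marchaudRight1d α f) := by
  rw [funext (marchaudRight1d_eq_rightCorrelation hα0 hα1 hf hfc)]
  exact continuous_const.mul (contDiff_rightCorrelation (n := 0)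
    (locallyIntegrable_rpow (by linarith)) (contDiff_zero.2 (hf.continuous_deriv le_rfl))
    hfc.deriv).continuous

end MarchaudDerivative

section Cutoffs

variable {β : ℝ}

theorem sq_mul_abs_comp_mul_left_le {f : ℝ → ℝ} {C a : ℝ}
    (hf : ∀ x, |f x| ≤ C * (1 + |x|) ^ (-β)) (hβ : 0 ≤ β) (ha0 : 0 < a) (ha1 : a ≤ 1) (x : ℝ) :
    a ^ 2 * |f (a * x)| ≤ a ^ (2 - β) * C * (1 + |x|) ^ (-β) := by
  have hC : 0 ≤ C := by simpa using (abs_nonneg _).trans (hf 0)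
  have hle : a * (1 + |x|) ≤ 1 + |a * x| := by
    rw [abs_mul, abs_of_pos ha0]
    linarith
  calc a ^ 2 * |f (a * x)| ≤ a ^ 2 * (C * (1 + |a * x|) ^ (-β)) := by gcongr; exact hf _
    _ ≤ a ^ 2 * (C * (a * (1 + |x|)) ^ (-β)) := by
        gcongr a ^ 2 * (C * ?_)
        exact Real.rpow_le_rpow_of_nonpos (by positivity) hle (by linarith)
    _ = a ^ (2 - β) * C * (1 + |x|) ^ (-β) := by
        rw [Real.mul_rpow ha0.le (by positivity), sub_eq_add_neg, Real.rpow_add ha0,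
          Real.rpow_two]
        ring

theorem deriv_deriv_comp_mul_left (a : ℝ) (f : ℝ → ℝ) (x : ℝ) :
    deriv (deriv fun y => f (a * y)) x = a ^ 2 * deriv (deriv f) (a * x) := by
  have hderiv : (deriv fun y => f (a * y)) = fun y => a * deriv f (a * y) :=
    funext fun y => deriv_comp_mul_left a f y
  rw [hderiv, deriv_const_mul_field, deriv_comp_mul_left, smul_eq_mul, sq, mul_assoc]

theorem exists_cutoff_abs_deriv_deriv_le (hβ0 : 0 ≤ β) (hβ2 : β < 2) {ε : ℝ} (hε : 0 < ε) :
    ∃ p : ℝ → ℝ, ContDiff ℝ ∞ p ∧ HasCompactSupport p ∧ p 0 = 1 ∧ deriv p 0 = 0 ∧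
      ∀ x, |deriv (deriv p) x| ≤ ε * (1 + |x|) ^ (-β) := by
  let b : ContDiffBump (0 : ℝ) := default
  have hb : ContDiff ℝ ∞ b := b.contDiff
  obtain ⟨A, hA⟩ := HasCompactSupport.exists_bound_of_continuous
    (f := fun y => (1 + |y|) ^ β * deriv (deriv b) y) b.hasCompactSupport.deriv.deriv.mul_left
    (((by fun_prop : Continuous fun y : ℝ => 1 + |y|).rpow_const fun _ => Or.inr hβ0).mul
      (contDiff_infty_iff_deriv.1 (contDiff_infty_iff_deriv.1 hb).2).2.continuous)
  have hlim : Tendsto (fun a : ℝ => a ^ (2 - β) * A) (𝓝[>] 0) (𝓝 0) := by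
    have hcont : ContinuousAt (fun a : ℝ => a ^ (2 - β) * A) 0 :=
      (Real.continuousAt_rpow_const _ _ (Or.inr (by linarith))).mul continuousAt_const
    simpa [Real.zero_rpow (by linarith : 2 - β ≠ 0)] using
      hcont.tendsto.mono_left nhdsWithin_le_nhds
  obtain ⟨a, ⟨haε, ha1⟩, ha0 : 0 < a⟩ := ((hlim.eventually (gt_mem_nhds hε)).and
    (nhdsWithin_le_nhds (Iio_mem_nhds zero_lt_one)) |>.and self_mem_nhdsWithin).exists
  refine ⟨fun x => b (a * x), hb.comp (contDiff_const.mul contDiff_id),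
    b.hasCompactSupport.comp_homeomorph (Homeomorph.mulLeft₀ a ha0.ne'), ?_, ?_, fun x => ?_⟩
  · simpa using b.eventuallyEq_one.eq_of_nhds
  · rw [deriv_comp_mul_left, mul_zero, b.eventuallyEq_one.deriv_eq]
    simp
  · have hbA : ∀ y, |deriv (deriv b) y| ≤ A * (1 + |y|) ^ (-β) := fun y => by
      have hAy := hA y
      rw [norm_mul, Real.norm_of_nonneg (by positivity), Real.norm_eq_abs] at hAy
      rwa [Real.rpow_neg (by positivity), ← div_eq_mul_inv, le_div_iff₀' (by positivity)]
    rw [deriv_deriv_comp_mul_left, abs_mul, abs_of_nonneg (sq_nonneg a)]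
    exact (sq_mul_abs_comp_mul_left_le hbA hβ0 ha0 ha1.le x).trans (by gcongr)

theorem abs_integral_Ioi_comp_mul_mul_deriv_deriv_add_le {p h : ℝ → ℝ} {ε v : ℝ}
    (hp : ContDiff ℝ 2 p) (hp0 : p 0 = 1) (hp0' : deriv p 0 = 0)
    (hpε : ∀ x, |deriv (deriv p) x| ≤ ε * (1 + |x|) ^ (-β)) (hβ0 : 0 ≤ β) (hβ2 : β ≤ 2)
    (hh : ContDiff ℝ 2 h) (hhc : HasCompactSupport h) (hv0 : 0 < v) (hv1 : v ≤ 1) :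
    |(∫ x in Ioi (0 : ℝ), p (v * x) * deriv (deriv h) x) + deriv h 0|
      ≤ ε * ∫ x in Ioi (0 : ℝ), (1 + x) ^ (-β) * |h x| := by
  have hε : 0 ≤ ε := by simpa using (abs_nonneg _).trans (hpε 0)
  have hgreen := integral_Ioi_mul_deriv_deriv (p := fun x => p (v * x))
    (hp.comp (contDiff_const.mul contDiff_id)) hh hhc 0
  rw [deriv_comp_mul_left, mul_zero, hp0, hp0', smul_zero, zero_mul, zero_sub, one_mul] at hgreen
  rw [hgreen, neg_add_eq_sub, sub_add_cancel, ← integral_const_mul, ← Real.norm_eq_abs]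
  have hweight : IntegrableOn (fun x => ε * ((1 + x) ^ (-β) * |h x|)) (Ioi 0) := by
    refine ((hh.continuous.integrable_of_hasCompactSupport hhc).norm.integrableOn.bdd_mul (c := 1)
      (by fun_prop : Measurable fun x : ℝ => (1 + x) ^ (-β)).aestronglyMeasurable ?_).const_mul ε
    refine (ae_restrict_mem measurableSet_Ioi).mono fun x (hx : 0 < x) => ?_
    rw [Real.norm_of_nonneg (by positivity)]
    exact Real.rpow_le_one_of_one_le_of_nonpos (by linarith) (by linarith)
  refine norm_integral_le_of_norm_le hweight ?_
  filter_upwards [ae_restrict_mem measurableSet_Ioi] with x (hx : 0 < x)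
  rw [deriv_deriv_comp_mul_left, norm_mul, Real.norm_eq_abs, Real.norm_eq_abs, abs_mul,
    abs_of_nonneg (sq_nonneg v), ← mul_assoc]
  refine mul_le_mul_of_nonneg_right ?_ (abs_nonneg _)
  calc v ^ 2 * |deriv (deriv p) (v * x)| ≤ v ^ (2 - β) * ε * (1 + |x|) ^ (-β) :=
        sq_mul_abs_comp_mul_left_le hpε hβ0 hv0 hv1 x
    _ ≤ 1 * ε * (1 + |x|) ^ (-β) := by
        gcongr
        exact Real.rpow_le_one hv0.le hv1 (by linarith)
    _ = ε * (1 + x) ^ (-β) := by rw [one_mul, abs_of_pos hx]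

theorem one_add_rpow_neg_le_two_div {s : ℝ} (hs : 0 ≤ s) (hβ : 0 ≤ β) :
    (1 + s) ^ (-β) ≤ 2 / (1 + s ^ β) := by
  have h1 : 1 ≤ (1 + s) ^ β := Real.one_le_rpow (by linarith) hβ
  have h2 : s ^ β ≤ (1 + s) ^ β := Real.rpow_le_rpow hs (by linarith) hβ
  rw [Real.rpow_neg (by positivity), ← one_div, div_le_div_iff₀ (by positivity) (by positivity)]
  linarith

theorem one_add_rpow_neg_mul_abs_le {h : ℝ → ℝ} {M : ℝ} (hM0 : 0 ≤ M)
    (hM : ∀ t ∉ Ioo (-M) M, h t = 0) (hβ : 0 ≤ β) (t : ℝ) {x : ℝ} (hx : 0 ≤ x) :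
    (1 + x) ^ (-β) * |h (t + x)|
      ≤ (1 + M) ^ β * (2 / (1 + |t| ^ β)) * |h (t + x)| := by
  by_cases hxM : t + x ∈ Ioo (-M) M
  swap
  · rw [hM _ hxM, abs_zero, mul_zero, mul_zero]
  have ht : 1 + |t| ≤ (1 + M) * (1 + x) := by
    have : |t| ≤ M + x := abs_le.2 ⟨by linarith [hxM.1], by linarith [hxM.2]⟩
    nlinarith
  gcongr
  calc (1 + x) ^ (-β) = (1 + M) ^ β * ((1 + M) * (1 + x)) ^ (-β) := by
        rw [Real.mul_rpow (by positivity) (by positivity), ← mul_assoc,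
          ← Real.rpow_add (by positivity), add_neg_cancel, Real.rpow_zero, one_mul]
    _ ≤ (1 + M) ^ β * (1 + |t|) ^ (-β) := by
        gcongr ?_ * ?_
        exact Real.rpow_le_rpow_of_nonpos (by positivity) ht (by linarith)
    _ ≤ (1 + M) ^ β * (2 / (1 + |t| ^ β)) := by
        gcongr
        exact one_add_rpow_neg_le_two_div (abs_nonneg t) hβ

theorem integral_Ioi_one_add_rpow_neg_mul_abs_le {h : ℝ → ℝ} (hh : Integrable h) {M : ℝ}
    (hM0 : 0 ≤ M) (hM : ∀ t ∉ Ioo (-M) M, h t = 0) (hβ : 0 ≤ β) (t : ℝ) :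
    ∫ x in Ioi (0 : ℝ), (1 + x) ^ (-β) * |h (t + x)|
      ≤ 2 * (1 + M) ^ β * (∫ x, |h x|) * (Iic M).indicator (fun t => (1 + |t| ^ β)⁻¹) t := by
  rcases lt_or_ge M t with htM | htM
  · rw [indicator_of_notMem (notMem_Iic.2 htM), mul_zero]
    refine (setIntegral_eq_zero_of_forall_eq_zero fun x (hx : 0 < x) => ?_).le
    rw [hM _ fun hx' => by linarith [hx'.2], abs_zero, mul_zero]
  have hint : Integrable fun x => (1 + M) ^ β * (2 / (1 + |t| ^ β)) * |h (t + x)| :=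
    (hh.comp_add_left t).norm.const_mul _
  have hpos := ae_restrict_mem (μ := (volume : Measure ℝ)) (measurableSet_Ioi (a := 0))
  rw [indicator_of_mem (mem_Iic.2 htM), ← integral_add_left_eq_self (fun x => |h x|) t]
  calc ∫ x in Ioi (0 : ℝ), (1 + x) ^ (-β) * |h (t + x)|
      ≤ ∫ x in Ioi (0 : ℝ), (1 + M) ^ β * (2 / (1 + |t| ^ β)) * |h (t + x)| :=
        integral_mono_of_nonneg
          (hpos.mono fun x (hx : 0 < x) => by simp only [Pi.zero_apply]; positivity)
          hint.integrableOn (hpos.mono fun x hx => one_add_rpow_neg_mul_abs_le hM0 hM hβ t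
            (le_of_lt hx))
    _ ≤ ∫ x, (1 + M) ^ β * (2 / (1 + |t| ^ β)) * |h (t + x)| :=
        setIntegral_le_integral hint (Eventually.of_forall fun x => by
          simp only [Pi.zero_apply]; positivity)
    _ = 2 * (1 + M) ^ β * (∫ x, |h (t + x)|) * (1 + |t| ^ β)⁻¹ := by
        rw [integral_const_mul]
        ring

end Cutoffs

section Approximation

theorem abs_integral_mul_sub_le {Ω : Type*} [MeasurableSpace Ω] {ν : Measure Ω} {m f : Ω → ℝ}
    {a δ : ℝ} (hm : Integrable m ν) (hm0 : ∀ᵐ w ∂ν, 0 ≤ m w) (hf : AEStronglyMeasurable f ν)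
    (hfa : ∀ᵐ w ∂ν, |f w - a| ≤ δ) :
    |(∫ w, m w * f w ∂ν) - (∫ w, m w ∂ν) * a| ≤ (∫ w, m w ∂ν) * δ := by
  have hsub : Integrable (fun w => m w * (f w - a)) ν :=
    hm.mul_bdd (hf.sub aestronglyMeasurable_const) hfa
  have hmf : Integrable (fun w => m w * f w) ν :=
    (hsub.add (hm.mul_const a)).congr (Eventually.of_forall fun w => by
      simp only [Pi.add_apply]; ring)
  rw [← integral_mul_const, ← integral_mul_const, ← integral_sub hmf (hm.mul_const a),
    ← Real.norm_eq_abs]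
  refine norm_integral_le_of_norm_le (hm.mul_const δ) ?_
  filter_upwards [hm0, hfa] with w hw hfw
  rw [← mul_sub, norm_mul, Real.norm_of_nonneg hw]
  exact mul_le_mul_of_nonneg_left hfw hw

theorem integral_smul_eq_zero_of_forall_exists_abs_sub_le {Ω E : Type*} [MeasurableSpace Ω]
    {ν : Measure Ω} [NormedAddCommGroup E] [NormedSpace ℝ E] {u : Ω → E} {g W : Ω → ℝ}
    (hu : AEStronglyMeasurable u ν) (hg : AEStronglyMeasurable g ν)
    (hgu : Integrable (fun x => g x • u x) ν) (hWu : Integrable (fun x => W x * ‖u x‖) ν)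
    (hfg : ∀ δ : ℝ, 0 < δ → ∃ f : Ω → ℝ, AEStronglyMeasurable f ν ∧
      (∀ᵐ x ∂ν, |f x - g x| ≤ δ * W x) ∧ ∫ x, f x • u x ∂ν = 0) :
    ∫ x, g x • u x ∂ν = 0 := by
  have hbound : ∀ δ : ℝ, 0 < δ → ‖∫ x, g x • u x ∂ν‖ ≤ δ * ∫ x, W x * ‖u x‖ ∂ν := by
    intro δ hδ
    obtain ⟨f, hf, hfgδ, hfu⟩ := hfg δ hδ
    have hle : ∀ᵐ x ∂ν, ‖(f x - g x) • u x‖ ≤ δ * (W x * ‖u x‖) := hfgδ.mono fun x hx => by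
      rw [norm_smul, Real.norm_eq_abs, ← mul_assoc]
      gcongr
    have hdiff : Integrable (fun x => (f x - g x) • u x) ν :=
      (hWu.const_mul δ).mono' ((hf.sub hg).smul hu) hle
    have hsplit : ∫ x, (f x - g x) • u x ∂ν = -∫ x, g x • u x ∂ν := by
      have hfint : Integrable (fun x => f x • u x) ν :=
        (hdiff.add hgu).congr (Eventually.of_forall fun x => by
          simp only [Pi.add_apply, ← add_smul, sub_add_cancel])
      simp only [sub_smul]
      rw [integral_sub hfint hgu, hfu, zero_sub]
    rw [← norm_neg, ← hsplit, ← integral_const_mul]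
    exact norm_integral_le_of_norm_le (hWu.const_mul δ) hle
  have hlim : Tendsto (fun δ : ℝ => δ * ∫ x, W x * ‖u x‖ ∂ν) (𝓝[>] 0) (𝓝 0) := by
    simpa using (tendsto_id.mul_const _ : Tendsto _ (𝓝 (0 : ℝ)) _).mono_left nhdsWithin_le_nhds
  exact norm_le_zero_iff.1 (ge_of_tendsto hlim (eventually_nhdsWithin_of_forall hbound))

variable {α : ℝ}

/-- The constant by which the Marchaud derivative of order `α` multiplies `g` when applied to
`∫₀^∞ r^(α - 1) g(t + r) dr`. Its value is `Γ(α)`, but only its positivity matters here. -/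
noncomputable def marchaudConst (α : ℝ) : ℝ :=
  1 / (α * |Real.Gamma (-α)|) * ∫ w in Ioi (0 : ℝ), w ^ (α - 1) / (1 + w)

theorem marchaudConst_pos (hα0 : 0 < α) (hα1 : α < 1) : 0 < marchaudConst α := by
  have hΓ : Real.Gamma (-α) ≠ 0 := Real.Gamma_ne_zero fun n hn => by
    have hn' : α = n := neg_inj.1 hn
    have h0 : 0 < n := by exact_mod_cast hn' ▸ hα0
    have h1 : n < 1 := by exact_mod_cast hn' ▸ hα1
    omega
  have := integral_Ioi_rpow_div_one_add_pos hα0 hα1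
  unfold marchaudConst
  positivity

theorem marchaudRight1d_rightCorrelation (hα0 : 0 < α) (hα1 : α < 1) {p g : ℝ → ℝ}
    (hp : Continuous p) (hpc : HasCompactSupport p) (hg : ContDiff ℝ 1 g)
    (hgc : HasCompactSupport g) (t : ℝ) :
    marchaudRight1d α (rightCorrelation (fun r => r ^ (α - 1) * p r) g) t
      = -(1 / (α * |Real.Gamma (-α)|)) * ∫ w in Ioi (0 : ℝ), w ^ (α - 1) / (1 + w) *
          ∫ x in Ioi (0 : ℝ), p (w / (1 + w) * x) * deriv g (t + x) := by
  have hk := (locallyIntegrable_rpow (by linarith : -1 < α - 1)).mul_continuous hp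
  have hg' : Continuous (deriv g) := hg.continuous_deriv le_rfl
  obtain ⟨C, hC⟩ := hp.bounded_above_of_compact_support hpc
  have hint : Integrable fun x => deriv g (t + x) :=
    (hg'.integrable_of_hasCompactSupport hgc.deriv).comp_add_left t
  rw [marchaudRight1d_eq_rightCorrelation hα0 hα1 (contDiff_rightCorrelation (n := 1) hk hg hgc)
      (hasCompactSupport_rightCorrelation hpc.mul_left hgc), deriv_rightCorrelation hk hg hgc,
    ← integral_Ioi_rpow_neg_mul_rightCorrelation hα0 hα1 hp.measurable hC hg'.measurable
      hint.integrableOn, rightCorrelation]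

theorem abs_marchaudRight1d_rightCorrelation_deriv_sub_le (hα0 : 0 < α) (hα1 : α < 1) {β ε : ℝ}
    {p η : ℝ → ℝ} (hp : ContDiff ℝ 2 p) (hpc : HasCompactSupport p) (hp0 : p 0 = 1)
    (hp0' : deriv p 0 = 0) (hpε : ∀ x, |deriv (deriv p) x| ≤ ε * (1 + |x|) ^ (-β)) (hβ0 : 0 ≤ β)
    (hβ2 : β ≤ 2) (hη : ContDiff ℝ 2 η) (hηc : HasCompactSupport η) (t : ℝ) :
    |marchaudRight1d α (rightCorrelation (fun r => r ^ (α - 1) * p r) (deriv η)) t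
        - marchaudConst α * deriv η t|
      ≤ marchaudConst α * (ε * ∫ x in Ioi (0 : ℝ), (1 + x) ^ (-β) * |η (t + x)|) := by
  set f : ℝ → ℝ := fun w => ∫ x in Ioi (0 : ℝ), p (w / (1 + w) * x) * deriv (deriv η) (t + x)
  set δ := ε * ∫ x in Ioi (0 : ℝ), (1 + x) ^ (-β) * |η (t + x)|
  have hη' : ContDiff ℝ 1 (deriv η) := hη.deriv'
  have hpos : ∀ᵐ w ∂volume.restrict (Ioi (0 : ℝ)), 0 < w := ae_restrict_mem measurableSet_Ioi
  have hfmeas : AEStronglyMeasurable f (volume.restrict (Ioi 0)) := by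
    have := hp.continuous
    have := hη'.continuous_deriv le_rfl
    exact (StronglyMeasurable.integral_prod_right'
      (f := fun q : ℝ × ℝ => p (q.1 / (1 + q.1) * q.2) * deriv (deriv η) (t + q.2))
      (by fun_prop : Measurable _).stronglyMeasurable).aestronglyMeasurable
  have hfδ : ∀ᵐ w ∂volume.restrict (Ioi (0 : ℝ)), |f w - -deriv η t| ≤ δ :=
    hpos.mono fun w hw => by
      have hbound := abs_integral_Ioi_comp_mul_mul_deriv_deriv_add_le
        (h := fun x => η (t + x)) hp hp0 hp0' hpε hβ0 hβ2 (hη.comp (contDiff_const.add contDiff_id))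
        (hηc.comp_homeomorph (Homeomorph.addLeft t)) (div_pos hw (by linarith : 0 < 1 + w))
        ((div_le_one (by linarith)).2 (by linarith))
      have hshift (g : ℝ → ℝ) : (deriv fun x => g (t + x)) = fun x => deriv g (t + x) :=
        funext fun x => deriv_comp_const_add g t x
      simpa only [hshift, add_zero, sub_neg_eq_add] using hbound
  have havg := abs_integral_mul_sub_le (integrableOn_Ioi_rpow_div_one_add hα0 hα1)
    (hpos.mono fun w hw => by positivity) hfmeas hfδ
  set a := 1 / (α * |Real.Gamma (-α)|)
  have ha : 0 ≤ a := by positivity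
  rw [marchaudRight1d_rightCorrelation hα0 hα1 hp.continuous hpc hη' hηc.deriv, marchaudConst]
  calc |-a * (∫ w in Ioi (0 : ℝ), w ^ (α - 1) / (1 + w) * f w)
        - a * (∫ w in Ioi (0 : ℝ), w ^ (α - 1) / (1 + w)) * deriv η t|
      = a * |(∫ w in Ioi (0 : ℝ), w ^ (α - 1) / (1 + w) * f w)
          - (∫ w in Ioi (0 : ℝ), w ^ (α - 1) / (1 + w)) * -deriv η t| := by
        rw [← abs_of_nonneg ha, ← abs_mul, ← abs_neg, abs_of_nonneg ha]
        congr 1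
        ring
    _ ≤ a * (∫ w in Ioi (0 : ℝ), w ^ (α - 1) / (1 + w)) * δ := by
        rw [mul_assoc]
        gcongr

theorem exists_abs_marchaudRight1d_sub_deriv_le (hα0 : 0 < α) (hα1 : α < 1) {η : ℝ → ℝ}
    (hη : ContDiff ℝ ∞ η) (hηc : HasCompactSupport η) :
    ∃ M : ℝ, ∀ δ : ℝ, 0 < δ → ∃ φ : ℝ → ℝ, ContDiff ℝ ∞ φ ∧ HasCompactSupport φ ∧
      ∀ t, |marchaudRight1d α φ t - marchaudConst α * deriv η t|
        ≤ δ * (Iic M).indicator (fun t => (1 + |t| ^ (1 + α))⁻¹) t := by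
  obtain ⟨M, hM0, hM⟩ := exists_forall_notMem_Ioo_eq_zero hηc
  have hβ : 0 ≤ 1 + α := by linarith
  have hc := marchaudConst_pos hα0 hα1
  refine ⟨M, fun δ hδ => ?_⟩
  set K := marchaudConst α * (2 * (1 + M) ^ (1 + α) * ∫ x, |η x|)
  have : 0 ≤ K := by positivity
  obtain ⟨p, hp, hpc, hp0, hp0', hpε⟩ :=
    exists_cutoff_abs_deriv_deriv_le hβ (by linarith : 1 + α < 2) (by positivity : 0 < δ / (K + 1))
  have hk : LocallyIntegrable fun r : ℝ => r ^ (α - 1) * p r :=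
    (locallyIntegrable_rpow (by linarith : -1 < α - 1)).mul_continuous hp.continuous
  refine ⟨rightCorrelation (fun r => r ^ (α - 1) * p r) (deriv η),
    contDiff_rightCorrelation hk (contDiff_infty_iff_deriv.1 hη).2 hηc.deriv,
    hasCompactSupport_rightCorrelation hpc.mul_left hηc.deriv, fun t => ?_⟩
  set W := (Iic M).indicator fun t : ℝ => (1 + |t| ^ (1 + α))⁻¹
  have hW : 0 ≤ W t := indicator_nonneg (fun t _ => by positivity) t
  calc |marchaudRight1d α (rightCorrelation (fun r => r ^ (α - 1) * p r) (deriv η)) t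
        - marchaudConst α * deriv η t|
      ≤ marchaudConst α *
          (δ / (K + 1) * ∫ x in Ioi (0 : ℝ), (1 + x) ^ (-(1 + α)) * |η (t + x)|) :=
        abs_marchaudRight1d_rightCorrelation_deriv_sub_le hα0 hα1 (contDiff_infty.1 hp 2) hpc
          hp0 hp0' hpε hβ (by linarith) (contDiff_infty.1 hη 2) hηc t
    _ ≤ marchaudConst α * (δ / (K + 1) * (2 * (1 + M) ^ (1 + α) * (∫ x, |η x|) * W t)) := by
        gcongr
        exact integral_Ioi_one_add_rpow_neg_mul_abs_le
          (hη.continuous.integrable_of_hasCompactSupport hηc) hM0 hM hβ t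
    _ = δ * (K / (K + 1)) * W t := by ring
    _ ≤ δ * 1 * W t := by
        gcongr
        exact div_le_one_of_le₀ (by linarith) (by positivity)
    _ = δ * W t := by rw [mul_one]

end Approximation

theorem liouville_marchaud_general {E : Type*} [NormedAddCommGroup E] [NormedSpace ℝ E]
    [CompleteSpace E] {α : ℝ} (hα0 : 0 < α) (hα1 : α < 1) {u : ℝ → E}
    (hu_loc : LocallyIntegrable u)
    (hu_space : IntegrableAtFilter (fun t : ℝ => ‖u t‖ / (1 + |t| ^ (1 + α))) atBot)
    (hu_sol : ∀ φ : ℝ → ℝ, ContDiff ℝ ∞ φ → HasCompactSupport φ →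
      ∫ t : ℝ, marchaudRight1d α φ t • u t = 0) :
    ∃ c : E, ∀ᵐ t, u t = c := by
  have hweight : LocallyIntegrable fun t : ℝ => ‖u t‖ / (1 + |t| ^ (1 + α)) :=
    LocallyIntegrable.mul_continuous ((continuous_const.add (continuous_abs.rpow_const
      fun _ => Or.inr (by linarith))).inv₀ fun t => (by positivity : 1 + |t| ^ (1 + α) ≠ 0))
      fun t => (hu_loc t).norm
  refine ae_eq_const_of_integral_deriv_smul_eq_zero hu_loc fun η hη hηc => ?_
  have hη' : ContDiff ℝ ∞ (deriv η) := (contDiff_infty_iff_deriv.1 hη).2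
  obtain ⟨M, hM⟩ := exists_abs_marchaudRight1d_sub_deriv_le hα0 hα1 hη hηc
  have hzero : ∫ t, (marchaudConst α * deriv η t) • u t = 0 := by
    refine integral_smul_eq_zero_of_forall_exists_abs_sub_le hu_loc.aestronglyMeasurable
      (hη'.continuous.const_mul _).aestronglyMeasurable ?_
      (W := (Iic M).indicator fun t => (1 + |t| ^ (1 + α))⁻¹) ?_ fun δ hδ => ?_
    · exact hu_loc.integrable_smul_left_of_hasCompactSupport (hη'.continuous.const_mul _)
        hηc.deriv.mul_left
    · refine ((integrable_indicator_iff measurableSet_Iic).2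
        (integrableOn_Iic_iff_integrableAtFilter_atBot.2
          ⟨hu_space, hweight.locallyIntegrableOn _⟩ : IntegrableOn _ (Iic M))).congr
        (Eventually.of_forall fun t => ?_)
      simp only [indicator_apply, ite_mul, zero_mul, div_eq_inv_mul]
    · obtain ⟨φ, hφ, hφc, hφδ⟩ := hM δ hδ
      exact ⟨_, (continuous_marchaudRight1d hα0 hα1 (hφ.of_le (by simp)) hφc).aestronglyMeasurable,
        Eventually.of_forall hφδ, hu_sol φ hφ hφc⟩
  simp only [mul_smul, integral_smul] at hzero
  exact (smul_eq_zero.1 hzero).resolve_left (marchaudConst_pos hα0 hα1).ne'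

/-- Liouville theorem for the one-sided Marchaud fractional equation
`∂_t^α u = 0` on `ℝ`: every distributional solution `u ∈ 𝓛_α(ℝ)` is a.e. constant. -/
theorem liouville_marchaud
    (α : ℝ) (hα0 : 0 < α) (hα1 : α < 1)
    (u : ℝ → ℝ)
    (hu_loc : LocallyIntegrable u)
    (hu_space : Integrable (fun t : ℝ => |u t| / (1 + |t| ^ (1 + α))))
    (hu_sol : ∀ φ : SchwartzMap ℝ ℝ, ∫ t : ℝ, u t * marchaudRight1d α (⇑φ) t = 0) :
    ∃ c : ℝ, ∀ᵐ t : ℝ ∂volume, u t = c :=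
  liouville_marchaud_general hα0 hα1 hu_loc (hu_space.integrableAtFilter _) fun φ hφ hφc => by
    simp_rw [smul_eq_mul, mul_comm (marchaudRight1d _ _ _)]
    exact hu_sol (hφc.toSchwartzMap hφ)
end
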